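/- Let N ≥ 3 and let μ be a real-valued function on the orthogonal projections of ℂ^N such that (i) μ(E) ≥ 0 for every orthogonal projection E, and (ii) for every finite tuple (E₁,…,E_M) of pairwise commuting orthogonal projections with E₁ + ⋯ + E_M = 1, one has ∑_{i=1}^M μ(E_i) = 1. Then there exists a positive semidefinite Hermitian operator ρ on ℂ^N with tr ρ = 1 such that μ(E) = tr(Eρ) for every orthogonal projection E. -/

import Mathlib

open scoped ComplexOrder

/-- An orthogonal projection on `ℂ^N`: a linear operator `E` with `E² = E = E†`. -/
def IsProjection {N : ℕ} (E : Matrix (Fin N) (Fin N) ℂ) : Prop :=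
  E * E = E ∧ E.IsHermitian

/-- Degree-zero frame functions of weight zero on `ℝ³`, in coordinates. -/
structure FF (f : ℝ → ℝ → ℝ → ℝ) : Prop where
  hom : ∀ t x y z : ℝ, t ≠ 0 → f (t * x) (t * y) (t * z) = f x y z
  frame : ∀ x1 y1 z1 x2 y2 z2 x3 y3 z3 : ℝ,
    0 < x1 ^ 2 + y1 ^ 2 + z1 ^ 2 → 0 < x2 ^ 2 + y2 ^ 2 + z2 ^ 2 → 0 < x3 ^ 2 + y3 ^ 2 + z3 ^ 2 →
    x1 * x2 + y1 * y2 + z1 * z2 = 0 → x1 * x3 + y1 * y3 + z1 * z3 = 0 →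
    x2 * x3 + y2 * y3 + z2 * z3 = 0 →
    f x1 y1 z1 + f x2 y2 z2 + f x3 y3 z3 = 0

/-- Symmetrisation by the quarter turn about the third axis. -/
def symq (f : ℝ → ℝ → ℝ → ℝ) (x y z : ℝ) : ℝ := f x y z + f (-y) x z

lemma FF.symq {f : ℝ → ℝ → ℝ → ℝ} (hf : FF f) : FF (symq f) where
  hom t x y z ht := by
    have h1 := hf.hom t x y z ht
    have h2 := hf.hom t (-y) x z ht
    rw [mul_neg] at h2
    simp only [_root_.symq, h1, h2]
  frame x1 y1 z1 x2 y2 z2 x3 y3 z3 h1 h2 h3 h12 h13 h23 := by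
    have a := hf.frame x1 y1 z1 x2 y2 z2 x3 y3 z3 h1 h2 h3 h12 h13 h23
    have b := hf.frame (-y1) x1 z1 (-y2) x2 z2 (-y3) x3 z3 (by linarith) (by linarith)
      (by linarith) (by linarith) (by linarith) (by linarith)
    simp only [_root_.symq]
    linarith

lemma symq_pole (f : ℝ → ℝ → ℝ → ℝ) : symq f 0 0 1 = 2 * f 0 0 1 := by
  simp [symq]; ring

lemma symq_equator {f : ℝ → ℝ → ℝ → ℝ} (hf : FF f) (x y : ℝ) (h : 0 < x ^ 2 + y ^ 2) :
    symq f x y 0 = - f 0 0 1 := by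
  have := hf.frame x y 0 (-y) x 0 0 0 1 (by linarith) (by linarith) (by norm_num)
    (by ring) (by ring) (by ring)
  simp only [symq]; linarith

/-- The meridian trick: values below are bounded from below. -/
lemma frame_lower {g : ℝ → ℝ → ℝ → ℝ} (hg : FF g) {c B : ℝ}
    (heq : ∀ x y, 0 < x ^ 2 + y ^ 2 → g x y 0 = -c) (hle : ∀ x y z, g x y z ≤ B)
    (x y z : ℝ) (h : 0 < x ^ 2 + y ^ 2) : c - B ≤ g x y z := by
  have h1 := hg.frame x y z (x * z) (y * z) (-(x ^ 2 + y ^ 2)) (-y) x 0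
    (by positivity)
    (add_pos_of_nonneg_of_pos (by positivity) (by rw [neg_sq]; exact pow_pos h 2)) (by nlinarith)
    (by ring) (by ring) (by ring)
  have h2 := heq (-y) x (by linarith)
  have h3 := hle (x * z) (y * z) (-(x ^ 2 + y ^ 2))
  linarith

/-- One step of great circle descent. -/
lemma frame_descent {g : ℝ → ℝ → ℝ → ℝ} (hg : FF g) {c B : ℝ}
    (heq : ∀ x y, 0 < x ^ 2 + y ^ 2 → g x y 0 = -c) (hle : ∀ x y z, g x y z ≤ B)
    (hB : 0 ≤ B - 2 * c)
    (a b τ : ℝ) : g (a - τ * b) (b + τ * a) 1 ≤ g a b 1 + (B - 2 * c) := by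
  by_cases h0 : a ^ 2 + b ^ 2 = 0
  · have ha : a = 0 := by nlinarith [sq_nonneg a, sq_nonneg b]
    have hb : b = 0 := by nlinarith [sq_nonneg a, sq_nonneg b]
    subst ha hb
    simp; linarith
  have h : 0 < a ^ 2 + b ^ 2 := lt_of_le_of_ne (by positivity) (Ne.symm h0)
  set r := a ^ 2 + b ^ 2 with hr
  have h1 := hg.frame a b 1 (-b) a 0 a b (-r) (by positivity) (by nlinarith) (by positivity)
    (by ring) (by rw [hr]; ring) (by ring)
  have hn : (-τ * r * a + (1 + r) * (-b)) ^ 2 + (-τ * r * b + (1 + r) * a) ^ 2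
      = r * (τ ^ 2 * r ^ 2 + (1 + r) ^ 2) := by rw [hr]; ring
  have hn0 : 0 < (-τ * r * a + (1 + r) * (-b)) ^ 2 + (-τ * r * b + (1 + r) * a) ^ 2 := by
    rw [hn]; positivity
  have h2 := hg.frame (a - τ * b) (b + τ * a) 1
    (-τ * r * a + (1 + r) * (-b)) (-τ * r * b + (1 + r) * a) (-τ * r)
    a b (-r) (by positivity) (by positivity) (by positivity)
    (by rw [hr]; ring) (by rw [hr]; ring) (by rw [hr]; ring)
  have h3 := heq (-b) a (by linarith)
  have h4 := frame_lower hg heq hle _ _ (-τ * r) hn0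
  linarith

/-- The gnomonic chart. -/
def chart (g : ℝ → ℝ → ℝ → ℝ) (u : ℂ) : ℝ := g u.re u.im 1

lemma chart_two {G : ℂ → ℝ} {e : ℝ} (hG : ∀ (u : ℂ) (τ : ℝ), G (u * (1 + τ * Complex.I)) ≤ G u + e)
    (u : ℂ) (k : ℝ) (hk : 1 ≤ k) : G (k * u) ≤ G u + 2 * e := by
  have h1 := hG u (√(k - 1))
  have h2 := hG (u * (1 + (√(k - 1) : ℝ) * Complex.I)) (-√(k - 1))
  have h3 : u * (1 + (√(k - 1) : ℝ) * Complex.I) * (1 + ((-√(k - 1) : ℝ) : ℂ) * Complex.I)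
      = k * u := by
    have : ((√(k - 1) : ℝ) : ℂ) ^ 2 = k - 1 := by
      rw [← Complex.ofReal_pow, Real.sq_sqrt (by linarith)]; push_cast; ring
    push_cast
    linear_combination u * this - (u * ((√(k - 1) : ℝ) : ℂ) ^ 2) * (Complex.I_sq)
  rw [h3] at h2
  linarith

lemma chart_steps {G : ℂ → ℝ} (hG : ∀ (u : ℂ) (τ : ℝ), G (u * (1 + τ * Complex.I)) ≤ G u)
    (u : ℂ) (τ : ℝ) (n : ℕ) : G (u * (1 + τ * Complex.I) ^ n) ≤ G u := by
  induction n with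
  | zero => simp
  | succ n ih =>
    rw [pow_succ, ← mul_assoc]
    exact (hG _ _).trans ih

lemma chart_mono {G : ℂ → ℝ} (hG : ∀ (u : ℂ) (τ : ℝ), G (u * (1 + τ * Complex.I)) ≤ G u)
    (u v : ℂ) (hu : u ≠ 0) (huv : ‖u‖ < ‖v‖) : G v ≤ G u := by
  set φ : ℝ := Complex.arg (v / u) with hφ
  have hu' : 0 < ‖u‖ := norm_pos_iff.mpr hu
  set ρ : ℝ := ‖v‖ / ‖u‖ with hρ
  have hρ1 : 1 < ρ := by rw [hρ, one_lt_div hu']; exact huv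
  have hv : v = u * (ρ * Complex.exp (φ * Complex.I)) := by
    have := Complex.norm_mul_exp_arg_mul_I (v / u)
    rw [norm_div] at this
    rw [hρ, hφ, this]
    field_simp
  obtain ⟨n, hn⟩ := exists_nat_gt (max 1 (max (φ ^ 2) (φ ^ 2 / 2 / (1 - ρ⁻¹))))
  have hn1 : (1 : ℝ) < n := lt_of_le_of_lt (le_max_left _ _) hn
  have hn2 : φ ^ 2 < n := lt_of_le_of_lt ((le_max_left _ _).trans (le_max_right _ _)) hn
  have hn3 : φ ^ 2 / 2 / (1 - ρ⁻¹) < n :=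
    lt_of_le_of_lt ((le_max_right _ _).trans (le_max_right _ _)) hn
  have hρi : ρ⁻¹ < 1 := inv_lt_one_of_one_lt₀ hρ1
  have hnpos : (0 : ℝ) < n := by linarith
  set ψ : ℝ := φ / n with hψ
  have hψ2 : ψ ^ 2 / 2 ≤ 1 / 2 := by
    rw [hψ, div_pow]
    have : φ ^ 2 / (n : ℝ) ^ 2 ≤ 1 := by
      rw [div_le_one (by positivity)]; nlinarith
    linarith
  have hcos : 1 - ψ ^ 2 / 2 ≤ Real.cos ψ := Real.one_sub_sq_div_two_le_cos
  have hcpos : 0 < Real.cos ψ := by linarith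
  have hcn : ρ⁻¹ ≤ Real.cos ψ ^ n := by
    have h1 : (1 - ψ ^ 2 / 2) ^ n ≤ Real.cos ψ ^ n :=
      pow_le_pow_left₀ (by linarith) hcos n
    have h2 := one_add_mul_le_pow (a := -(ψ ^ 2 / 2)) (by linarith) n
    have h3 : (n : ℝ) * (ψ ^ 2 / 2) ≤ 1 - ρ⁻¹ := by
      have : (n : ℝ) * (ψ ^ 2 / 2) = φ ^ 2 / 2 / n := by rw [hψ]; field_simp
      rw [this, div_le_iff₀ hnpos]
      rw [div_lt_iff₀ (by linarith)] at hn3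
      linarith
    have h4 : (1 + -(ψ ^ 2 / 2)) ^ n = (1 - ψ ^ 2 / 2) ^ n := by ring
    rw [h4] at h2
    linarith
  have hk : 1 ≤ ρ * Real.cos ψ ^ n := by
    have : ρ * ρ⁻¹ = 1 := mul_inv_cancel₀ (by linarith)
    nlinarith
  have e1 : (1 + ((Real.tan ψ : ℝ) : ℂ) * Complex.I) = Complex.exp (ψ * Complex.I) / Real.cos ψ := by
    rw [Complex.exp_mul_I, Real.tan_eq_sin_div_cos]
    have : ((Real.cos ψ : ℝ) : ℂ) ≠ 0 := by exact_mod_cast hcpos.ne'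
    push_cast at this ⊢
    field_simp
  have e2 : v = ((ρ * Real.cos ψ ^ n : ℝ) : ℂ) * (u * (1 + (Real.tan ψ : ℝ) * Complex.I) ^ n) := by
    rw [e1, div_pow, ← Complex.exp_nat_mul]
    have h5 : (n : ℂ) * (ψ * Complex.I) = φ * Complex.I := by
      have : (n : ℂ) ≠ 0 := by exact_mod_cast hnpos.ne'
      rw [hψ]; push_cast; field_simp
    have : ((Real.cos ψ : ℝ) : ℂ) ≠ 0 := by exact_mod_cast hcpos.ne'
    rw [h5, hv]
    push_cast at this ⊢
    field_simp
  rw [e2]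
  have := chart_two (e := 0) (by simpa using hG) (u * (1 + (Real.tan ψ : ℝ) * Complex.I) ^ n) _ hk
  have := chart_steps hG u (Real.tan ψ) n
  linarith


/-- The functional equation satisfied by a monotone function of latitude. -/
lemma latitude_lower {k : ℝ → ℝ} (h0 : ∀ x, 0 < x → x < 1 → 0 ≤ k x)
    (hc : ∀ x y, 0 < x → x < 1 → 0 < y → y < 1 → 1 < x + y → 1 ≤ k x + k y)
    (hlow : ∀ x y z, 0 < x → 0 < y → 0 < z → x + y + z < 1 → k x + k y + k z ≤ 1)
    (hup : ∀ x y z, 0 < x → 0 < y → 0 < z → x < 1 → y < 1 → z < 1 → 1 < x + y + z →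
      1 ≤ k x + k y + k z) (x : ℝ) (hx : 0 < x) (hx1 : x < 1) : x ≤ k x := by
  have hc' : ∀ x y, 0 < x → 0 < y → x + y < 1 → k x + k y ≤ 1 := by
    intro x y hx hy h
    have := hlow x y ((1 - x - y) / 2) hx hy (by linarith) (by linarith)
    have := h0 ((1 - x - y) / 2) (by linarith) (by linarith)
    linarith
  have a1 : ∀ x y v, 0 < x → 0 < y → v < 1 → x + y < v → k x + k y ≤ k v := by
    intro x y v hx hy hv h
    obtain ⟨z, hz1, hz2⟩ := exists_between (show 1 - v < 1 - (x + y) by linarith)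
    have := hlow x y z hx hy (by linarith) (by linarith)
    have := hc v z (by linarith) hv (by linarith) (by linarith) (by linarith)
    linarith
  have a2 : ∀ x y v, 0 < x → 0 < y → x < 1 → y < 1 → 0 < v → v < 1 → v < x + y →
      k v ≤ k x + k y := by
    intro x y v hx hy hx1 hy1 hv hv1 h
    obtain ⟨z, hz1, hz2⟩ := exists_between (show max 0 (1 - (x + y)) < 1 - v from
      max_lt (by linarith) (by linarith))
    rw [max_lt_iff] at hz1
    have := hup x y z hx hy hz1.1 hx1 hy1 (by linarith) (by linarith)
    have := hc' v z hv hz1.1 (by linarith)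
    linarith
  have mono : ∀ x v, 0 < x → x < v → v < 1 → k x ≤ k v := by
    intro x v hx h hv
    have := a1 x ((v - x) / 2) v hx (by linarith) hv (by linarith)
    have := h0 ((v - x) / 2) (by linarith) (by linarith)
    linarith
  have b1 : ∀ n : ℕ, ∀ x v, 0 < x → v < 1 → ((n : ℝ) + 1) * x < v → ((n : ℝ) + 1) * k x ≤ k v := by
    intro n
    induction n with
    | zero =>
      intro x v hx hv h
      simp at h ⊢
      exact mono x v hx h hv
    | succ n ih =>
      intro x v hx hv h
      push_cast at h ⊢
      have hnx : 0 < ((n : ℝ) + 1) * x := by positivity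
      have := ih x ((((n : ℝ) + 1) * x + (v - x)) / 2) hx (by linarith) (by linarith)
      have := a1 ((((n : ℝ) + 1) * x + (v - x)) / 2) x v (by linarith) hx hv (by linarith)
      linarith
  have b2 : ∀ n : ℕ, ∀ x v, 0 < x → x < 1 → 0 < v → v < 1 → v < ((n : ℝ) + 1) * x →
      k v ≤ ((n : ℝ) + 1) * k x := by
    intro n
    induction n with
    | zero =>
      intro x v hx hx1 hv hv1 h
      simp at h ⊢
      exact mono v x hv h hx1
    | succ n ih =>
      intro x v hx hx1 hv hv1 h
      push_cast at h ⊢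
      have hnx : 0 < ((n : ℝ) + 1) * x := by positivity
      obtain ⟨v', h1, h2⟩ : ∃ v', max 0 (v - x) < v' ∧ v' < min 1 (((n : ℝ) + 1) * x) := by
        apply exists_between
        simp only [lt_min_iff, max_lt_iff]
        refine ⟨⟨by norm_num, by linarith⟩, hnx, by linarith⟩
      simp only [lt_min_iff, max_lt_iff] at h1 h2
      have := ih x v' hx hx1 h1.1 h2.1 h2.2
      have := a2 v' x v h1.1 hx h2.1 hx1 hv hv1 (by linarith)
      linarith
  -- `k` tends to one at one
  have c1 : ∀ j : ℕ, ∃ v, 0 < v ∧ v < 1 ∧ 1 - 1 / ((j : ℝ) + 1) ≤ k v := by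
    intro j
    have hj : (0 : ℝ) < (j : ℝ) + 1 := by positivity
    have hw : 0 < 1 / (3 * ((j : ℝ) + 1)) := by positivity
    have hw1 : 1 / (3 * ((j : ℝ) + 1)) < 1 := by
      rw [div_lt_one (by positivity)]
      have : (0 : ℝ) ≤ j := by positivity
      linarith
    refine ⟨1 - 1 / (3 * ((j : ℝ) + 1)) / 2, by linarith, by linarith, ?_⟩
    have h1 := b1 j (1 / (3 * ((j : ℝ) + 1))) (1 / 2) hw (by norm_num) (by field_simp; norm_num)
    have h2 := hc' (1 / 2) (1 / 4) (by norm_num) (by norm_num) (by norm_num)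
    have h3 := h0 (1 / 4) (by norm_num) (by norm_num)
    have h4 := hc (1 - 1 / (3 * ((j : ℝ) + 1)) / 2) _ (by linarith) (by linarith) hw hw1
      (by linarith)
    have h5 : k (1 / (3 * ((j : ℝ) + 1))) ≤ 1 / ((j : ℝ) + 1) := by
      rw [le_div_iff₀ hj]; linarith
    linarith
  have c2 : ∀ m n : ℕ, ((m : ℝ) + 1) / ((n : ℝ) + 1) < x → ((m : ℝ) + 1) / ((n : ℝ) + 1) ≤ k x := by
    intro m n hmn
    have hm : (0 : ℝ) < (m : ℝ) + 1 := by positivity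
    have hn : (0 : ℝ) < (n : ℝ) + 1 := by positivity
    obtain ⟨y, hy1, hy2⟩ : ∃ y, 1 / ((n : ℝ) + 1) < y ∧ y < x / ((m : ℝ) + 1) := by
      apply exists_between
      rw [div_lt_div_iff₀ hn hm]
      rw [div_lt_iff₀ hn] at hmn
      linarith
    have hy0 : 0 < y := lt_trans (by positivity) hy1
    rw [div_lt_iff₀ hn] at hy1
    rw [lt_div_iff₀ hm] at hy2
    have hm' : (0 : ℝ) ≤ m := by positivity
    have d1 := b1 m y x hy0 hx1 (by linarith)
    have d2 : ∀ v, 0 < v → v < 1 → k v ≤ ((n : ℝ) + 1) * k y := fun v hv hv1 =>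
      b2 n y v hy0 (by nlinarith) hv hv1 (by linarith)
    have d3 : 1 ≤ ((n : ℝ) + 1) * k y := by
      refine le_of_forall_pos_sub_le fun ε hε => ?_
      obtain ⟨j, hj⟩ := exists_nat_one_div_lt hε
      obtain ⟨v, hv0, hv1, hv⟩ := c1 j
      have := d2 v hv0 hv1
      linarith
    rw [div_le_iff₀ hn]
    calc (m : ℝ) + 1 ≤ ((m : ℝ) + 1) * (((n : ℝ) + 1) * k y) := le_mul_of_one_le_right hm.le d3
      _ = (((m : ℝ) + 1) * k y) * ((n : ℝ) + 1) := by ring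
      _ ≤ k x * ((n : ℝ) + 1) := by gcongr
  refine le_of_forall_lt fun y hy => ?_
  by_contra hcon
  push Not at hcon
  obtain ⟨q, hq1, hq2⟩ := exists_rat_btwn (max_lt hy hx)
  rw [max_lt_iff] at hq1
  have hq0 : 0 < q := by exact_mod_cast hq1.2
  have e : ((q.num.toNat - 1 : ℕ) : ℝ) + 1 = q.num := by
    have h1 : 0 < q.num := Rat.num_pos.mpr hq0
    have h2 : (q.num.toNat - 1 : ℕ) + 1 = q.num.toNat := by omega
    have h3 : ((q.num.toNat : ℤ) : ℝ) = q.num := by rw [Int.toNat_of_nonneg h1.le]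
    rw [← h3]; exact_mod_cast h2
  have e2 : ((q.den - 1 : ℕ) : ℝ) + 1 = q.den := by
    have h1 : 0 < q.den := q.den_pos
    have h2 : (q.den - 1 : ℕ) + 1 = q.den := by omega
    exact_mod_cast h2
  have e3 : (q : ℝ) = (q.num : ℝ) / q.den := by exact_mod_cast (Rat.num_div_den q).symm
  have := c2 (q.num.toNat - 1) (q.den - 1)
  rw [e, e2, ← e3] at this
  have := this hq2
  linarith

/-- A frame with prescribed latitudes. -/
lemma frame_latitudes {g : ℝ → ℝ → ℝ → ℝ} (hg : FF g) (x y z : ℝ) (hx : 0 < x) (hy : 0 < y)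
    (hz : 0 < z) (h : x + y + z = 1) : ∃ u v w : ℂ, ‖u‖ ^ 2 = 1 / x - 1 ∧ ‖v‖ ^ 2 = 1 / y - 1 ∧
      ‖w‖ ^ 2 = 1 / z - 1 ∧ chart g u + chart g v + chart g w = 0 := by
  obtain ⟨a, ha, rfl⟩ : ∃ a : ℝ, 0 < a ∧ a ^ 2 = x := ⟨√x, by positivity, Real.sq_sqrt hx.le⟩
  obtain ⟨b, hb, rfl⟩ : ∃ b : ℝ, 0 < b ∧ b ^ 2 = y := ⟨√y, by positivity, Real.sq_sqrt hy.le⟩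
  obtain ⟨c, hc, rfl⟩ : ∃ c : ℝ, 0 < c ∧ c ^ 2 = z := ⟨√z, by positivity, Real.sq_sqrt hz.le⟩
  obtain ⟨r, hr, hr2⟩ : ∃ r : ℝ, 0 < r ∧ r ^ 2 = a ^ 2 + b ^ 2 :=
    ⟨√(a ^ 2 + b ^ 2), by positivity, Real.sq_sqrt (by positivity)⟩
  have hc2 : c ^ 2 = 1 - r ^ 2 := by linarith
  have hb2 : b ^ 2 = r ^ 2 - a ^ 2 := by linarith
  refine ⟨⟨-b / (a * r), - c / r⟩, ⟨a / (b * r), - c / r⟩, ⟨0, r / c⟩, ?_, ?_, ?_, ?_⟩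
  · rw [← Complex.normSq_eq_norm_sq, Complex.normSq_mk]
    field_simp
    rw [hc2, hb2]; ring
  · rw [← Complex.normSq_eq_norm_sq, Complex.normSq_mk]
    field_simp
    have : a ^ 2 = r ^ 2 - b ^ 2 := by linarith
    rw [hc2, this]; ring
  · rw [← Complex.normSq_eq_norm_sq, Complex.normSq_mk]
    field_simp
    linarith
  · simp only [chart]
    apply hg.frame
    · positivity
    · positivity
    · positivity
    · field_simp
      rw [hc2]; ring
    · field_simp
      ring
    · field_simp
      ring

/-- The exact form of the extremal theorem. -/
lemma extremal_exact {g : ℝ → ℝ → ℝ → ℝ} (hg : FF g) (hp : g 0 0 1 = 2)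
    (heq : ∀ x y, 0 < x ^ 2 + y ^ 2 → g x y 0 = -1) (hle : ∀ x y z, g x y z ≤ 2) (u : ℂ) :
    chart g u = 3 / (1 + ‖u‖ ^ 2) - 1 := by
  have hG : ∀ (u : ℂ) (τ : ℝ), chart g (u * (1 + τ * Complex.I)) ≤ chart g u := by
    intro u τ
    have := frame_descent hg heq hle (by norm_num) u.re u.im τ
    simp only [chart]
    have e1 : (u * (1 + τ * Complex.I)).re = u.re - τ * u.im := by simp; ring
    have e2 : (u * (1 + τ * Complex.I)).im = u.im + τ * u.re := by simp; ring
    rw [e1, e2]; linarith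
  by_cases hu0 : u = 0
  · subst hu0
    simp [chart, hp]; norm_num
  have hlow : ∀ u : ℂ, u ≠ 0 → -1 ≤ chart g u := by
    intro u hu
    have h : 0 < u.re ^ 2 + u.im ^ 2 := by
      have := Complex.normSq_pos.mpr hu
      rw [Complex.normSq_apply] at this; nlinarith
    have := frame_lower hg heq hle u.re u.im 1 h
    simp only [chart]; linarith
  set k : ℝ → ℝ := fun x => (chart g ((√(1 / x - 1) : ℝ) : ℂ) + 1) / 3 with hk
  have hq : ∀ x : ℝ, 0 < x → x < 1 → 0 < 1 / x - 1 := by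
    intro x hx hx1
    have := (one_lt_div hx).mpr hx1
    linarith
  have hqn : ∀ x : ℝ, 0 < x → x < 1 → ((√(1 / x - 1) : ℝ) : ℂ) ≠ 0 := by
    intro x hx hx1
    have := hq x hx hx1
    exact_mod_cast (Real.sqrt_pos.mpr this).ne'
  have hqs : ∀ x : ℝ, 0 < x → x < 1 → ‖((√(1 / x - 1) : ℝ) : ℂ)‖ ^ 2 = 1 / x - 1 := by
    intro x hx hx1
    rw [Complex.norm_real, Real.norm_eq_abs, sq_abs, Real.sq_sqrt (hq x hx hx1).le]
  have cmp1 : ∀ x : ℝ, 0 < x → x < 1 → ∀ v : ℂ, v ≠ 0 → ‖v‖ ^ 2 < 1 / x - 1 →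
      k x ≤ (chart g v + 1) / 3 := by
    intro x hx hx1 v hv h
    have := chart_mono hG v ((√(1 / x - 1) : ℝ) : ℂ) hv
      (by rw [← hqs x hx hx1] at h; exact lt_of_pow_lt_pow_left₀ 2 (by positivity) h)
    simp only [hk]; linarith
  have cmp2 : ∀ x : ℝ, 0 < x → x < 1 → ∀ v : ℂ, 1 / x - 1 < ‖v‖ ^ 2 →
      (chart g v + 1) / 3 ≤ k x := by
    intro x hx hx1 v h
    have := chart_mono hG ((√(1 / x - 1) : ℝ) : ℂ) v (hqn x hx hx1)
      (by rw [← hqs x hx hx1] at h; exact lt_of_pow_lt_pow_left₀ 2 (by positivity) h)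
    simp only [hk]; linarith
  have hne : ∀ (v : ℂ) (x : ℝ), 0 < x → x < 1 → ‖v‖ ^ 2 = 1 / x - 1 → v ≠ 0 := by
    intro v x hx hx1 h hv
    have := hq x hx hx1
    rw [← h, hv] at this
    simp at this
  have hk0 : ∀ x, 0 < x → x < 1 → 0 ≤ k x := by
    intro x hx hx1
    have := hlow _ (hqn x hx hx1)
    simp only [hk]; linarith
  have inv_lt : ∀ a b : ℝ, 0 < a → a < b → 1 / b - 1 < 1 / a - 1 := by
    intro a b ha hab
    have := one_div_lt_one_div_of_lt ha hab
    linarith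
  have hkc : ∀ x y, 0 < x → x < 1 → 0 < y → y < 1 → 1 < x + y → 1 ≤ k x + k y := by
    intro x y hx hx1 hy hy1 hxy
    have hx' := hq x hx hx1
    set t := √(1 / x - 1) with ht
    have ht0 : 0 < t := Real.sqrt_pos.mpr hx'
    have ht2 : t ^ 2 = 1 / x - 1 := Real.sq_sqrt hx'.le
    have e : 1 / (1 - x) - 1 = (1 / t) ^ 2 := by
      rw [div_pow, ht2]
      have : (1 - x) ≠ 0 := by linarith
      field_simp
      ring
    have h1 := hg.frame t 0 1 (-(1 / t)) 0 1 0 1 0 (by positivity) (by positivity) (by norm_num)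
      (by field_simp; ring) (by ring) (by ring)
    have h2 := heq 0 1 (by norm_num)
    have h3 := cmp2 y hy hy1 ((-(1 / t) : ℝ) : ℂ) (by
      rw [Complex.norm_real, Real.norm_eq_abs, sq_abs, neg_sq, ← e]
      exact inv_lt _ _ (by linarith) (by linarith))
    have h4 : k x = (g t 0 1 + 1) / 3 := by
      simp only [hk, chart, Complex.ofReal_re, Complex.ofReal_im, ← ht]
    simp only [chart, Complex.ofReal_re, Complex.ofReal_im] at h3
    linarith
  have hklow : ∀ x y z, 0 < x → 0 < y → 0 < z → x + y + z < 1 → k x + k y + k z ≤ 1 := by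
    intro x y z hx hy hz h
    set S := x + y + z with hS
    have hS0 : 0 < S := by positivity
    have hd : ∀ a, 0 < a → a < a / S := fun a ha => by rw [lt_div_iff₀ hS0]; nlinarith
    have hd1 : ∀ a, a < S → a / S < 1 := fun a ha => by rw [div_lt_one hS0]; exact ha
    obtain ⟨u, v, w, hu, hv, hw, hs⟩ := frame_latitudes hg (x / S) (y / S) (z / S)
      (by positivity) (by positivity) (by positivity) (by field_simp; exact hS.symm)
    have c1 := cmp1 x hx (by linarith) u (hne u _ (by positivity) (hd1 x (by linarith)) hu)
      (by rw [hu]; exact inv_lt _ _ hx (hd x hx))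
    have c2 := cmp1 y hy (by linarith) v (hne v _ (by positivity) (hd1 y (by linarith)) hv)
      (by rw [hv]; exact inv_lt _ _ hy (hd y hy))
    have c3 := cmp1 z hz (by linarith) w (hne w _ (by positivity) (hd1 z (by linarith)) hw)
      (by rw [hw]; exact inv_lt _ _ hz (hd z hz))
    linarith
  have hkup : ∀ x y z, 0 < x → 0 < y → 0 < z → x < 1 → y < 1 → z < 1 → 1 < x + y + z →
      1 ≤ k x + k y + k z := by
    intro x y z hx hy hz hx1 hy1 hz1 h
    set S := x + y + z with hS
    have hS0 : 0 < S := by positivity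
    have hd : ∀ a, 0 < a → a / S < a := fun a ha => by rw [div_lt_iff₀ hS0]; nlinarith
    obtain ⟨u, v, w, hu, hv, hw, hs⟩ := frame_latitudes hg (x / S) (y / S) (z / S)
      (by positivity) (by positivity) (by positivity) (by field_simp; exact hS.symm)
    have c1 := cmp2 x hx hx1 u (by rw [hu]; exact inv_lt _ _ (by positivity) (hd x hx))
    have c2 := cmp2 y hy hy1 v (by rw [hv]; exact inv_lt _ _ (by positivity) (hd y hy))
    have c3 := cmp2 z hz hz1 w (by rw [hw]; exact inv_lt _ _ (by positivity) (hd z hz))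
    linarith
  have hge := latitude_lower hk0 hkc hklow hkup
  have hle' : ∀ x, 0 < x → x < 1 → k x ≤ x := by
    intro x hx hx1
    refine le_of_forall_pos_le_add fun ε hε => ?_
    obtain ⟨y, hy1, hy2⟩ := exists_between (show max 0 (1 - x - ε) < 1 - x from
      max_lt (by linarith) (by linarith))
    rw [max_lt_iff] at hy1
    have h1 := hklow x y ((1 - x - y) / 2) hx hy1.1 (by linarith) (by linarith)
    have h2 := hk0 ((1 - x - y) / 2) (by linarith) (by linarith)
    have h3 := hge y hy1.1 (by linarith)
    linarith
  -- conclusion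
  have hu2 : 0 < ‖u‖ ^ 2 := by positivity
  set X := 1 / (1 + ‖u‖ ^ 2) with hX
  have hX0 : 0 < X := by positivity
  have hX1 : X < 1 := by rw [hX, div_lt_one (by positivity)]; linarith
  have hXu : ‖u‖ ^ 2 = 1 / X - 1 := by rw [hX]; field_simp; ring
  have hfin : (chart g u + 1) / 3 = X := by
    apply le_antisymm
    · refine le_of_forall_gt_imp_ge_of_dense fun b hb => ?_
      rcases lt_or_ge b 1 with hb1 | hb1
      · have h1 := cmp2 b (by linarith) hb1 u (by rw [hXu]; exact inv_lt _ _ hX0 hb)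
        exact h1.trans (hle' b (by linarith) hb1)
      · have := hle u.re u.im 1
        simp only [chart]; linarith
    · refine le_of_forall_lt_imp_le_of_dense fun b hb => ?_
      rcases lt_or_ge 0 b with hb0 | hb0
      · have h1 := cmp1 b hb0 (by linarith) u hu0 (by rw [hXu]; exact inv_lt _ _ hb0 hb)
        exact (hge b hb0 (by linarith)).trans h1
      · have := hlow u hu0
        linarith
  have : 3 / (1 + ‖u‖ ^ 2) = 3 * X := by rw [hX]; ring
  rw [this]; linarith

open Filter Topology in
/-- Approximate form of the extremal theorem at a fixed point. -/
lemma extremal_approx (u : ℂ) (ε : ℝ) (hε : 0 < ε) : ∃ δ > 0, ∀ f : ℝ → ℝ → ℝ → ℝ, FF f →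
    (∀ x y z, |f x y z| ≤ 1) → 1 - δ ≤ f 0 0 1 →
    |chart (symq f) u - (3 / (1 + ‖u‖ ^ 2) - 1)| < ε := by
  by_contra hcon
  push Not at hcon
  choose F hF hF1 hFp hFu using fun n : ℕ => hcon (1 / ((n : ℝ) + 1)) (by positivity)
  have hb : ∀ n x y z, symq (F n) x y z ∈ Set.Icc (-2 : ℝ) 2 := by
    intro n x y z
    have h1 := abs_le.mp (hF1 n x y z)
    have h2 := abs_le.mp (hF1 n (-y) x z)
    simp only [symq, Set.mem_Icc]
    constructor <;> linarith
  have hlim : ∀ x y z, ∃ l : ℝ, Tendsto (fun n => symq (F n) x y z) (hyperfilter ℕ) (𝓝 l) := by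
    intro x y z
    obtain ⟨l, -, hl⟩ := (isCompact_Icc (a := (-2 : ℝ)) (b := 2)).ultrafilter_le_nhds
      ((hyperfilter ℕ).map (fun n => symq (F n) x y z))
      (by
        rw [Ultrafilter.coe_map, le_principal_iff, mem_map]
        exact Eventually.of_forall fun n => hb n x y z)
    exact ⟨l, hl⟩
  choose g hg using hlim
  have hgF : FF g := by
    constructor
    · intro t x y z ht
      refine tendsto_nhds_unique (hg _ _ _) ((hg x y z).congr fun n => ?_)
      exact ((hF n).symq.hom t x y z ht).symm
    · intro x1 y1 z1 x2 y2 z2 x3 y3 z3 h1 h2 h3 h12 h13 h23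
      refine tendsto_nhds_unique (((hg x1 y1 z1).add (hg x2 y2 z2)).add (hg x3 y3 z3)) ?_
      exact tendsto_const_nhds.congr fun n =>
        ((hF n).symq.frame x1 y1 z1 x2 y2 z2 x3 y3 z3 h1 h2 h3 h12 h13 h23).symm
  have hle : ∀ x y z, g x y z ≤ 2 := fun x y z =>
    le_of_tendsto' (hg x y z) fun n => (hb n x y z).2
  have hpt : Tendsto (fun n => F n 0 0 1) (hyperfilter ℕ) (𝓝 1) := by
    have h1 : Tendsto (fun n => F n 0 0 1) atTop (𝓝 1) := by
      refine tendsto_of_tendsto_of_tendsto_of_le_of_le (g := fun n : ℕ => 1 - 1 / ((n : ℝ) + 1))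
        (h := fun _ => 1) ?_ tendsto_const_nhds hFp (fun n => (abs_le.mp (hF1 n 0 0 1)).2)
      simpa using (tendsto_const_nhds (x := (1 : ℝ))).sub
        (tendsto_one_div_add_atTop_nhds_zero_nat (𝕜 := ℝ))
    exact h1.mono_left Nat.hyperfilter_le_atTop
  have hp : g 0 0 1 = 2 := by
    refine tendsto_nhds_unique (hg 0 0 1) ?_
    have := hpt.const_mul 2
    rw [mul_one] at this
    exact this.congr fun n => (symq_pole (F n)).symm
  have heq : ∀ x y, 0 < x ^ 2 + y ^ 2 → g x y 0 = -1 := by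
    intro x y hxy
    refine tendsto_nhds_unique (hg x y 0) ?_
    exact hpt.neg.congr fun n => (symq_equator (hF n) x y hxy).symm
  have hex := extremal_exact hgF hp heq hle u
  have ht : Tendsto (fun n => |chart (symq (F n)) u - (3 / (1 + ‖u‖ ^ 2) - 1)|) (hyperfilter ℕ)
      (𝓝 |chart g u - (3 / (1 + ‖u‖ ^ 2) - 1)|) :=
    ((hg u.re u.im 1).sub_const _).abs
  have := ge_of_tendsto' ht hFu
  rw [hex, sub_self, abs_zero] at this
  linarith

/-- Near-extremal dichotomy in coordinates. -/
lemma extremal_dich (η : ℝ) (hη : 0 < η) (hη2 : η < 2) : ∃ δ > 0, δ ≤ 1 / 4 ∧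
    ∀ f : ℝ → ℝ → ℝ → ℝ, FF f →
    (∀ x y z, |f x y z| ≤ 1) → 1 - δ ≤ f 0 0 1 → ∀ x : ℝ, 0 < x →
    (2 + η ≤ x ^ 2 → f x 0 1 < 1 - δ) ∧ (x ^ 2 ≤ 2 - η → -1 + δ < f x 0 1) := by
  set u1 := √(2 + η) with hu1
  set u2 := √(2 - η) with hu2
  have h1p : 0 < u1 := Real.sqrt_pos.mpr (by linarith)
  have h2p : 0 < u2 := Real.sqrt_pos.mpr (by linarith)
  have h1s : u1 ^ 2 = 2 + η := Real.sq_sqrt (by linarith)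
  have h2s : u2 ^ 2 = 2 - η := Real.sq_sqrt (by linarith)
  set ε1 := 1 - 3 / (3 + η) with hε1
  set ε2 := 3 / (3 - η) - 1 with hε2
  have e1p : 0 < ε1 := by
    have : 3 / (3 + η) < 1 := by rw [div_lt_one (by linarith)]; linarith
    linarith
  have e2p : 0 < ε2 := by
    have : 1 < 3 / (3 - η) := by rw [one_lt_div (by linarith)]; linarith
    linarith
  obtain ⟨δ1, hδ1, H1⟩ := extremal_approx (u1 : ℂ) (ε1 / 2) (by linarith)
  obtain ⟨δ2, hδ2, H2⟩ := extremal_approx (u2 : ℂ) (ε2 / 2) (by linarith)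
  set δ := min (min δ1 δ2) (min (1 / 4) (min (ε1 / 20) (ε2 / 20))) with hδ
  have hδa : δ ≤ δ1 := (min_le_left _ _).trans (min_le_left _ _)
  have hδb : δ ≤ δ2 := (min_le_left _ _).trans (min_le_right _ _)
  have hδc : δ ≤ 1 / 4 := (min_le_right _ _).trans (min_le_left _ _)
  have hδd : δ ≤ ε1 / 20 := (min_le_right _ _).trans ((min_le_right _ _).trans (min_le_left _ _))
  have hδe : δ ≤ ε2 / 20 := (min_le_right _ _).trans ((min_le_right _ _).trans (min_le_right _ _))
  have hδ0 : 0 < δ := by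
    rw [hδ]; refine lt_min (lt_min hδ1 hδ2) (lt_min (by norm_num) (lt_min ?_ ?_)) <;> linarith
  refine ⟨δ, hδ0, hδc, fun f hf hb hp x hx => ?_⟩
  have hb' := fun x y z => abs_le.mp (hb x y z)
  have hG : ∀ (u : ℂ) (τ : ℝ), chart (symq f) (u * (1 + τ * Complex.I)) ≤
      chart (symq f) u + 2 * δ := by
    intro u τ
    have := frame_descent hf.symq (c := f 0 0 1) (B := 2) (symq_equator hf)
      (fun x y z => by have := hb' x y z; have := hb' (-y) x z; simp only [symq]; linarith)
      (by have := hb' 0 0 1; linarith) u.re u.im τ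
    simp only [chart]
    have e1 : (u * (1 + τ * Complex.I)).re = u.re - τ * u.im := by simp; ring
    have e2 : (u * (1 + τ * Complex.I)).im = u.im + τ * u.re := by simp; ring
    rw [e1, e2]; linarith
  have hfx : f x 0 1 = chart (symq f) (x : ℂ) - f 0 x 1 := by simp [chart, symq]
  have hfb := hb' 0 x 1
  constructor
  · intro h
    have hk : 1 ≤ x / u1 := by
      rw [one_le_div h1p]; exact le_of_sq_le_sq (by linarith) hx.le
    have h1 := chart_two hG (u1 : ℂ) (x / u1) hk
    have e : ((x / u1 : ℝ) : ℂ) * u1 = x := by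
      have : (u1 : ℂ) ≠ 0 := by exact_mod_cast h1p.ne'
      push_cast; field_simp
    rw [e] at h1
    have h2 := abs_lt.mp (H1 f hf hb (by linarith))
    rw [Complex.norm_real, Real.norm_eq_abs, sq_abs, h1s,
      show 1 + (2 + η) = 3 + η by ring] at h2
    linarith
  · intro h
    have hk : 1 ≤ u2 / x := by
      rw [one_le_div hx]; exact le_of_sq_le_sq (by linarith) h2p.le
    have h1 := chart_two hG (x : ℂ) (u2 / x) hk
    have e : ((u2 / x : ℝ) : ℂ) * x = u2 := by
      have : (x : ℂ) ≠ 0 := by exact_mod_cast hx.ne'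
      push_cast; field_simp
    rw [e] at h1
    have h2 := abs_lt.mp (H2 f hf hb (by linarith))
    rw [Complex.norm_real, Real.norm_eq_abs, sq_abs, h2s,
      show 1 + (2 - η) = 3 - η by ring] at h2
    linarith


/-- Degree-zero frame functions of weight zero on Euclidean three-space. -/
structure FV (f : EuclideanSpace ℝ (Fin 3) → ℝ) : Prop where
  zero : f 0 = 0
  hom : ∀ (t : ℝ) v, t ≠ 0 → f (t • v) = f v
  frame : ∀ u v w, u ≠ 0 → v ≠ 0 → w ≠ 0 → inner ℝ u v = 0 → inner ℝ u w = 0 → inner ℝ v w = 0 →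
    f u + f v + f w = 0

lemma FV.add {f g : EuclideanSpace ℝ (Fin 3) → ℝ} (hf : FV f) (hg : FV g) :
    FV (fun v => f v + g v) where
  zero := by simp [hf.zero, hg.zero]
  hom t v ht := by simp only [hf.hom t v ht, hg.hom t v ht]
  frame u v w h1 h2 h3 h4 h5 h6 := by
    have := hf.frame u v w h1 h2 h3 h4 h5 h6
    have := hg.frame u v w h1 h2 h3 h4 h5 h6
    linarith

lemma FV.smul {f : EuclideanSpace ℝ (Fin 3) → ℝ} (hf : FV f) (c : ℝ) :
    FV (fun v => c * f v) where
  zero := by simp [hf.zero]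
  hom t v ht := by simp only [hf.hom t v ht]
  frame u v w h1 h2 h3 h4 h5 h6 := by
    have := hf.frame u v w h1 h2 h3 h4 h5 h6
    linear_combination c * this

/-- Frame functions coming from quadratic forms, expressed by the parallelogram law. -/
structure QF (q : EuclideanSpace ℝ (Fin 3) → ℝ) : Prop where
  fv : FV q
  par : ∀ u v, ‖u + v‖ ^ 2 * q (u + v) + ‖u - v‖ ^ 2 * q (u - v)
    = 2 * (‖u‖ ^ 2 * q u) + 2 * (‖v‖ ^ 2 * q v)

lemma QF.zero : QF (fun _ => 0) where
  fv := ⟨rfl, fun _ _ _ => rfl, fun _ _ _ _ _ _ _ _ _ => by norm_num⟩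
  par u v := by ring

lemma QF.add {f g : EuclideanSpace ℝ (Fin 3) → ℝ} (hf : QF f) (hg : QF g) :
    QF (fun v => f v + g v) where
  fv := hf.fv.add hg.fv
  par u v := by linear_combination hf.par u v + hg.par u v

lemma QF.smul {f : EuclideanSpace ℝ (Fin 3) → ℝ} (hf : QF f) (c : ℝ) :
    QF (fun v => c * f v) where
  fv := hf.fv.smul c
  par u v := by linear_combination c * hf.par u v

lemma QF.sum {ι : Type*} (t : Finset ι) (q : ι → EuclideanSpace ℝ (Fin 3) → ℝ)
    (hq : ∀ i, QF (q i)) : QF (fun v => ∑ i ∈ t, q i v) := by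
  classical
  induction t using Finset.induction_on with
  | empty => simpa using QF.zero
  | insert a s ha ih =>
    simp only [Finset.sum_insert ha]
    exact (hq a).add ih

/-- The zonal quadratic frame function. -/
noncomputable def zonal (p v : EuclideanSpace ℝ (Fin 3)) : ℝ :=
  (3 * (inner ℝ p v) ^ 2 - ‖v‖ ^ 2) / ‖v‖ ^ 2

lemma parseval3 (p u v w : EuclideanSpace ℝ (Fin 3)) (hu : ‖u‖ = 1) (hv : ‖v‖ = 1) (hw : ‖w‖ = 1)
    (huv : inner ℝ u v = 0) (huw : inner ℝ u w = 0) (hvw : inner ℝ v w = 0) :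
    (inner ℝ p u) ^ 2 + (inner ℝ p v) ^ 2 + (inner ℝ p w) ^ 2 = ‖p‖ ^ 2 := by
  have ho : Orthonormal ℝ ![u, v, w] := by
    constructor
    · intro i; fin_cases i <;> simp [hu, hv, hw]
    · intro i j hij
      fin_cases i <;> fin_cases j <;>
        simp_all [real_inner_comm]
  let b := OrthonormalBasis.mk ho (by
    have := ho.linearIndependent.span_eq_top_of_card_eq_finrank (by simp)
    rw [this])
  have h := b.sum_sq_norm_inner_left p
  simp only [b, OrthonormalBasis.coe_mk, Fin.sum_univ_three] at h
  simpa [real_inner_comm] using h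

lemma zonal_QF (p : EuclideanSpace ℝ (Fin 3)) (hp : ‖p‖ = 1) : QF (zonal p) := by
  refine ⟨⟨by simp [zonal], ?_, ?_⟩, ?_⟩
  · intro t v ht
    by_cases hv : v = 0
    · simp [hv]
    have : ‖v‖ ≠ 0 := norm_ne_zero_iff.mpr hv
    simp only [zonal, inner_smul_right, norm_smul, Real.norm_eq_abs, mul_pow, sq_abs]
    field_simp
  · intro u v w hu hv hw huv huw hvw
    have hu' : ‖u‖ ≠ 0 := norm_ne_zero_iff.mpr hu
    have hv' : ‖v‖ ≠ 0 := norm_ne_zero_iff.mpr hv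
    have hw' : ‖w‖ ≠ 0 := norm_ne_zero_iff.mpr hw
    have := parseval3 p (‖u‖⁻¹ • u) (‖v‖⁻¹ • v) (‖w‖⁻¹ • w)
      (by rw [norm_smul]; simp [hu]) (by rw [norm_smul]; simp [hv]) (by rw [norm_smul]; simp [hw])
      (by simp [inner_smul_left, inner_smul_right, huv])
      (by simp [inner_smul_left, inner_smul_right, huw])
      (by simp [inner_smul_left, inner_smul_right, hvw])
    simp only [inner_smul_right, hp] at this
    simp only [zonal]
    have e : ∀ x : EuclideanSpace ℝ (Fin 3), ‖x‖ ≠ 0 →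
        (3 * (inner ℝ p x) ^ 2 - ‖x‖ ^ 2) / ‖x‖ ^ 2 = 3 * (‖x‖⁻¹ * inner ℝ p x) ^ 2 - 1 := by
      intro x hx; field_simp
    rw [e u hu', e v hv', e w hw']
    linarith
  · intro u v
    have e : ∀ x : EuclideanSpace ℝ (Fin 3),
        ‖x‖ ^ 2 * zonal p x = 3 * (inner ℝ p x) ^ 2 - ‖x‖ ^ 2 := by
      intro x
      by_cases hx : x = 0
      · simp [hx]
      have : ‖x‖ ≠ 0 := norm_ne_zero_iff.mpr hx
      simp only [zonal]; field_simp
    rw [e, e, e, e, inner_add_right, inner_sub_right]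
    have := parallelogram_law_with_norm ℝ u v
    linarith

lemma zonal_unit (p v : EuclideanSpace ℝ (Fin 3)) (hv : ‖v‖ = 1) :
    zonal p v = 3 * (inner ℝ p v) ^ 2 - 1 := by simp [zonal, hv]

lemma zonal_bound (p : EuclideanSpace ℝ (Fin 3)) (hp : ‖p‖ = 1) (v : EuclideanSpace ℝ (Fin 3)) :
    |zonal p v| ≤ 2 := by
  by_cases hx : v = 0
  · simp [hx, zonal]
  have h : 0 < ‖v‖ := norm_pos_iff.mpr hx
  have h1 := abs_real_inner_le_norm p v
  rw [hp, one_mul] at h1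
  have h2 : (inner ℝ p v) ^ 2 ≤ ‖v‖ ^ 2 := by rw [← sq_abs]; gcongr
  rw [zonal, abs_div, abs_of_pos (pow_pos h 2), div_le_iff₀ (pow_pos h 2), abs_le]
  constructor <;> nlinarith [sq_nonneg (inner ℝ p v)]

/-- Two vectors have a common unit normal in dimension at least three. -/
lemma exists_unit_normal {𝕜 E : Type*} [RCLike 𝕜] [NormedAddCommGroup E] [InnerProductSpace 𝕜 E]
    [FiniteDimensional 𝕜 E] (h3 : 3 ≤ Module.finrank 𝕜 E) (u v : E) :
    ∃ w : E, ‖w‖ = 1 ∧ inner 𝕜 u w = 0 ∧ inner 𝕜 v w = 0 := by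
  have hs : (Submodule.span 𝕜 {u, v}) ≠ ⊤ := by
    intro h
    have h1 : Module.finrank 𝕜 (Submodule.span 𝕜 ({u, v} : Set E)) ≤ 2 := by
      classical
      have := finrank_span_finset_le_card (R := 𝕜) ({u, v} : Finset E)
      have h2 : ({u, v} : Finset E).card ≤ 2 := Finset.card_le_two
      rw [Set.finrank, Finset.coe_pair] at this
      omega
    rw [h, finrank_top] at h1
    omega
  have hs' : (Submodule.span 𝕜 {u, v})ᗮ ≠ ⊥ := by
    intro h; exact hs (Submodule.orthogonal_eq_bot_iff.mp h)
  obtain ⟨w, hw, hw0⟩ := Submodule.exists_mem_ne_zero_of_ne_bot hs'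
  rw [Submodule.mem_orthogonal] at hw
  refine ⟨((‖w‖⁻¹ : ℝ) : 𝕜) • w, ?_, ?_, ?_⟩
  · rw [norm_smul]; simp [hw0]
  · rw [inner_smul_right, hw u (Submodule.subset_span (by simp)), mul_zero]
  · rw [inner_smul_right, hw v (Submodule.subset_span (by simp)), mul_zero]

lemma inner_combo {a b p : EuclideanSpace ℝ (Fin 3)} (ha : ‖a‖ = 1) (hb : ‖b‖ = 1) (hp : ‖p‖ = 1)
    (hab : inner ℝ a b = 0) (hap : inner ℝ a p = 0) (hbp : inner ℝ b p = 0)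
    (x y z x' y' z' : ℝ) :
    inner ℝ (x • a + y • b + z • p) (x' • a + y' • b + z' • p) = x * x' + y * y' + z * z' := by
  have hba : inner ℝ b a = 0 := by rw [real_inner_comm]; exact hab
  have hpa : inner ℝ p a = 0 := by rw [real_inner_comm]; exact hap
  have hpb : inner ℝ p b = 0 := by rw [real_inner_comm]; exact hbp
  simp only [inner_add_left, inner_add_right, real_inner_smul_left, real_inner_smul_right, hab,
    hap, hbp, hba, hpa, hpb, real_inner_self_eq_norm_sq, ha, hb, hp]
  ring

lemma FV.pull {f : EuclideanSpace ℝ (Fin 3) → ℝ} (hf : FV f) {a b p : EuclideanSpace ℝ (Fin 3)}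
    (ha : ‖a‖ = 1) (hb : ‖b‖ = 1) (hp : ‖p‖ = 1)
    (hab : inner ℝ a b = 0) (hap : inner ℝ a p = 0) (hbp : inner ℝ b p = 0) :
    FF (fun x y z => f (x • a + y • b + z • p)) := by
  have hn : ∀ x y z : ℝ, 0 < x ^ 2 + y ^ 2 + z ^ 2 → x • a + y • b + z • p ≠ 0 := by
    intro x y z h h0
    have := inner_combo ha hb hp hab hap hbp x y z x y z
    rw [h0, inner_zero_left] at this
    nlinarith
  constructor
  · intro t x y z ht
    rw [← hf.hom t (x • a + y • b + z • p) ht]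
    simp only [smul_add, smul_smul]
  · intro x1 y1 z1 x2 y2 z2 x3 y3 z3 h1 h2 h3 h12 h13 h23
    apply hf.frame _ _ _ (hn _ _ _ h1) (hn _ _ _ h2) (hn _ _ _ h3) <;>
      rw [inner_combo ha hb hp hab hap hbp] <;> assumption

lemma extremal_space (η : ℝ) (hη : 0 < η) (hη1 : η < 1) : ∃ δ > 0, δ ≤ 1 / 4 ∧
    ∀ f : EuclideanSpace ℝ (Fin 3) → ℝ, FV f → (∀ v, |f v| ≤ 1) →
    ∀ p v, ‖p‖ = 1 → ‖v‖ = 1 → 1 - δ ≤ f p →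
    (1 - δ ≤ f v → -η ≤ zonal p v) ∧ (f v ≤ -1 + δ → zonal p v ≤ η) := by
  obtain ⟨δ, hδ, hδ1, H⟩ := extremal_dich η hη (by linarith)
  refine ⟨δ, hδ, hδ1, fun f hf hb p v hp hv hfp => ?_⟩
  rw [zonal_unit p v hv]
  -- reduce to the upper hemisphere
  suffices key : ∀ v, ‖v‖ = 1 → 0 ≤ inner ℝ p v → (1 - δ ≤ f v → -η ≤ 3 * (inner ℝ p v) ^ 2 - 1) ∧
      (f v ≤ -1 + δ → 3 * (inner ℝ p v) ^ 2 - 1 ≤ η) by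
    rcases le_total 0 (inner ℝ p v) with h | h
    · exact key v hv h
    · have h1 := key (-v) (by rw [norm_neg, hv]) (by rw [inner_neg_right]; linarith)
      have h2 : f (-v) = f v := by
        have := hf.hom (-1) v (by norm_num)
        rwa [neg_one_smul] at this
      rw [h2, inner_neg_right, neg_sq] at h1
      exact h1
  intro v hv hc
  set c := inner ℝ p v with hcdef
  have hvv : inner ℝ v v = 1 := by rw [real_inner_self_eq_norm_sq, hv]; norm_num
  have hpp : inner ℝ p p = 1 := by rw [real_inner_self_eq_norm_sq, hp]; norm_num
  have hvp : inner ℝ v p = c := by rw [real_inner_comm]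
  have hne : ∀ x : EuclideanSpace ℝ (Fin 3), ‖x‖ = 1 → x ≠ 0 := by
    intro x hx h0; rw [h0, norm_zero] at hx; norm_num at hx
  have hc1 : c ≤ 1 := by
    have := real_inner_le_norm p v
    rwa [hp, hv, mul_one] at this
  rcases hc1.lt_or_eq with hc1 | hc1
  swap
  · rw [hc1]
    have : p = v := (inner_eq_one_iff_of_norm_eq_one hp hv).mp (by rw [← hcdef]; exact hc1)
    subst this
    refine ⟨fun _ => by linarith, fun h => by linarith⟩
  rcases hc.eq_or_lt with hc0 | hc0
  · rw [← hc0]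
    refine ⟨fun h => ?_, fun _ => by linarith⟩
    obtain ⟨b, hb1, hpb, hvb⟩ := exists_unit_normal (𝕜 := ℝ) (by simp) p v
    have := hf.frame p v b (hne p hp) (hne v hv) (hne b hb1) hc0.symm hpb hvb
    have := (abs_le.mp (hb b)).1
    linarith
  set s := √(1 - c ^ 2) with hs
  have hs1 : 0 < 1 - c ^ 2 := by nlinarith
  have hs0 : 0 < s := Real.sqrt_pos.mpr hs1
  have hs2 : s ^ 2 = 1 - c ^ 2 := Real.sq_sqrt hs1.le
  set a := s⁻¹ • (v - c • p) with ha
  have haa : ‖a‖ = 1 := by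
    have : ‖a‖ ^ 2 = 1 := by
      rw [← real_inner_self_eq_norm_sq, ha]
      simp only [real_inner_smul_left, real_inner_smul_right, inner_sub_left, inner_sub_right,
        hvv, hpp, hvp, ← hcdef]
      field_simp
      linarith
    exact (pow_eq_one_iff_of_nonneg (norm_nonneg a) (by norm_num)).mp this
  have hap : inner ℝ a p = 0 := by
    rw [ha]
    simp only [real_inner_smul_left, inner_sub_left, hvp, hpp]
    ring
  obtain ⟨b, hb1, hab, hpb⟩ := exists_unit_normal (𝕜 := ℝ) (by simp) a p
  have hbp : inner ℝ b p = 0 := by rw [real_inner_comm]; exact hpb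
  have hFF := hf.pull haa hb1 hp hab hap hbp
  have hx : 0 < s / c := by positivity
  have hD := H _ hFF (fun x y z => hb _) (by simpa using hfp) (s / c) hx
  have hfv : f ((s / c) • a + (0 : ℝ) • b + (1 : ℝ) • p) = f v := by
    rw [← hf.hom c⁻¹ v (by positivity)]
    congr 1
    rw [ha, smul_smul, smul_sub, smul_smul]
    have e1 : s / c * s⁻¹ = c⁻¹ := by field_simp
    have e2 : c⁻¹ * c = 1 := by field_simp
    rw [e1, e2]
    simp
  rw [hfv, div_pow, hs2] at hD
  constructor
  · intro h
    by_contra hcon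
    push Not at hcon
    have := hD.1 (by rw [le_div_iff₀ (by positivity)]; nlinarith)
    linarith
  · intro h
    by_contra hcon
    push Not at hcon
    have := hD.2 (by rw [div_le_iff₀ (by positivity)]; nlinarith)
    linarith

/-- Local building block of the contraction. -/
lemma local_block {η δ : ℝ} (hη : 0 < η) 
    (H : ∀ f : EuclideanSpace ℝ (Fin 3) → ℝ, FV f → (∀ v, |f v| ≤ 1) →
    ∀ p v, ‖p‖ = 1 → ‖v‖ = 1 → 1 - δ ≤ f p →
    (1 - δ ≤ f v → -η ≤ zonal p v) ∧ (f v ≤ -1 + δ → zonal p v ≤ η))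
    (h : EuclideanSpace ℝ (Fin 3) → ℝ) (hh : FV h) (hb : ∀ v, |h v| ≤ 1)
    (c : EuclideanSpace ℝ (Fin 3)) : ∃ q, QF q ∧ (∀ v, |q v| ≤ 2) ∧
      (∀ v, ‖v‖ = 1 → 1 - δ ≤ h v → -η ≤ q v) ∧ (∀ v, ‖v‖ = 1 → h v ≤ -1 + δ → q v ≤ η) ∧
      (∀ v, ‖v‖ = 1 → 1 - δ ≤ h v → v ∈ Metric.ball c (1 / 4) → 1 ≤ q v) := by
  by_cases hex : ∃ p, ‖p‖ = 1 ∧ 1 - δ ≤ h p ∧ p ∈ Metric.ball c (1 / 4)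
  · obtain ⟨p, hp, hhp, hpc⟩ := hex
    refine ⟨zonal p, zonal_QF p hp, zonal_bound p hp, fun v hv hv1 => (H h hh hb p v hp hv hhp).1 hv1,
      fun v hv hv1 => (H h hh hb p v hp hv hhp).2 hv1, fun v hv hv1 hvc => ?_⟩
    have hd : ‖p - v‖ ≤ 1 / 2 := by
      rw [← dist_eq_norm]
      have := dist_triangle_right p v c
      rw [Metric.mem_ball] at hpc hvc
      linarith
    have h1 := norm_sub_sq_real p v
    rw [hp, hv] at h1
    have h2 : ‖p - v‖ ^ 2 ≤ 1 / 4 := by nlinarith [norm_nonneg (p - v)]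
    rw [zonal_unit p v hv]
    nlinarith
  · refine ⟨fun _ => 0, QF.zero, fun v => by simp, fun v _ _ => by linarith,
      fun v _ _ => by linarith, fun v hv hv1 hvc => ?_⟩
    exact absurd ⟨v, hv, hv1, hvc⟩ hex

lemma contraction : ∃ c : ℝ, 0 < c ∧ c < 1 ∧ ∀ h : EuclideanSpace ℝ (Fin 3) → ℝ, FV h →
    (∀ v, |h v| ≤ 1) → ∃ q, QF q ∧ ∀ v, |h v - q v| ≤ c := by
  obtain ⟨t0, -, hfin, hcov⟩ := (isCompact_sphere (0 : EuclideanSpace ℝ (Fin 3)) 1).finite_cover_balls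
    (show (0 : ℝ) < 1 / 4 by norm_num)
  set t := hfin.toFinset with ht
  set K : ℝ := (t.card : ℝ) with hK
  have hK0 : 0 ≤ K := by positivity
  set η : ℝ := 1 / (4 * (K + 1)) with hη
  have hη0 : 0 < η := by positivity
  have hη1 : η < 1 := by rw [hη, div_lt_one (by positivity)]; linarith
  have hηK : η * K ≤ 1 / 4 := by
    rw [hη, div_mul_eq_mul_div, div_le_iff₀ (by positivity)]; linarith
  obtain ⟨δ, hδ, hδ1, H⟩ := extremal_space η hη0 hη1
  set ε := δ / (4 * K + 1) with hε
  have hε0 : 0 < ε := by positivity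
  have hεK : ε * (4 * K + 1) = δ := by rw [hε]; field_simp
  have hε1 : ε ≤ 1 / 4 := by nlinarith
  refine ⟨1 - ε / 2, by linarith, by linarith, fun h hh hb => ?_⟩
  have hneg : FV (fun v => -1 * h v) := hh.smul (-1)
  choose qA hA hA2 hA3 hA4 hA5 using local_block hη0 H h hh hb
  choose qB hB hB2 hB3 hB4 hB5 using local_block hη0 H _ hneg (fun v => by simpa using hb v)
  set Q : EuclideanSpace ℝ (Fin 3) → ℝ := fun v => ∑ c ∈ t, (qA c v + -1 * qB c v) with hQ
  have hQQ : QF Q := QF.sum t _ fun c => (hA c).add ((hB c).smul (-1))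
  have hQb : ∀ v, |Q v| ≤ 4 * K := by
    intro v
    calc |Q v| ≤ ∑ c ∈ t, |qA c v + -1 * qB c v| := Finset.abs_sum_le_sum_abs _ _
      _ ≤ ∑ c ∈ t, (4 : ℝ) := by
        refine Finset.sum_le_sum fun c _ => ?_
        have h1 := abs_le.mp (hA2 c v)
        have h2 := abs_le.mp (hB2 c v)
        rw [abs_le]; constructor <;> linarith
      _ = 4 * K := by simp [hK]; ring
  have hmem : ∀ v : EuclideanSpace ℝ (Fin 3), ‖v‖ = 1 → ∃ c ∈ t, v ∈ Metric.ball c (1 / 4) := by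
    intro v hv
    have := hcov (show v ∈ Metric.sphere (0 : EuclideanSpace ℝ (Fin 3)) 1 by simpa using hv)
    simpa [ht] using this
  have hQA : ∀ v, ‖v‖ = 1 → 1 - δ ≤ h v → 1 / 2 ≤ Q v := by
    intro v hv hhv
    obtain ⟨c0, hc0, hvc0⟩ := hmem v hv
    have h1 : ∀ c ∈ t, 0 ≤ (qA c v + -1 * qB c v) + 2 * η := by
      intro c _
      have := hA3 c v hv hhv
      have := hB4 c v hv (by linarith)
      linarith
    have h2 := Finset.single_le_sum h1 hc0
    rw [Finset.sum_add_distrib, Finset.sum_const, nsmul_eq_mul] at h2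
    have h3 := hA5 c0 v hv hhv hvc0
    have h4 := hB4 c0 v hv (by linarith)
    simp only [hQ]
    nlinarith
  have hQB : ∀ v, ‖v‖ = 1 → h v ≤ -1 + δ → Q v ≤ - (1 / 2) := by
    intro v hv hhv
    obtain ⟨c0, hc0, hvc0⟩ := hmem v hv
    have h1 : ∀ c ∈ t, 0 ≤ - (qA c v + -1 * qB c v) + 2 * η := by
      intro c _
      have := hA4 c v hv hhv
      have := hB3 c v hv (by linarith)
      linarith
    have h2 := Finset.single_le_sum h1 hc0
    rw [Finset.sum_add_distrib, Finset.sum_const, nsmul_eq_mul, Finset.sum_neg_distrib] at h2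
    have h3 := hB5 c0 v hv (by linarith) hvc0
    have h4 := hA4 c0 v hv (by linarith)
    simp only [hQ]
    nlinarith
  have hfinal : ∀ v, ‖v‖ = 1 → |h v - ε * Q v| ≤ 1 - ε / 2 := by
    intro v hv
    have h1 := abs_le.mp (hb v)
    have h2 := abs_le.mp (hQb v)
    rw [abs_le]
    by_cases hcA : 1 - δ ≤ h v
    · have := hQA v hv hcA
      constructor <;> nlinarith
    · by_cases hcB : h v ≤ -1 + δ
      · have := hQB v hv hcB
        constructor <;> nlinarith
      · push Not at hcA hcB
        constructor <;> nlinarith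
  refine ⟨fun v => ε * Q v, hQQ.smul ε, fun v => ?_⟩
  show |h v - ε * Q v| ≤ 1 - ε / 2
  by_cases hv : v = 0
  · rw [hv, hh.zero, hQQ.fv.zero]
    simp; linarith
  · have hn : ‖v‖ ≠ 0 := norm_ne_zero_iff.mpr hv
    have := hfinal (‖v‖⁻¹ • v) (by rw [norm_smul]; simp [hv])
    rwa [hh.hom _ v (inv_ne_zero hn), hQQ.fv.hom _ v (inv_ne_zero hn)] at this

/-- Real three-dimensional Gleason theorem, as a parallelogram law. -/
theorem FV.parallelogram {f : EuclideanSpace ℝ (Fin 3) → ℝ} (hf : FV f) {B : ℝ} (hB : 0 < B)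
    (hb : ∀ v, |f v| ≤ B) : QF f := by
  obtain ⟨c, hc0, hc1, H⟩ := contraction
  have hn : ∀ n : ℕ, ∃ q, QF q ∧ ∀ v, |f v - q v| ≤ B * c ^ n := by
    intro n
    induction n with
    | zero => exact ⟨fun _ => 0, QF.zero, by simpa using hb⟩
    | succ n ih =>
      obtain ⟨q, hq, hqb⟩ := ih
      have hpos : 0 < B * c ^ n := by positivity
      obtain ⟨q', hq', hqb'⟩ := H (fun v => (B * c ^ n)⁻¹ * (f v + -1 * q v))
        ((hf.add (hq.fv.smul (-1))).smul _) (fun v => by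
          rw [abs_mul, abs_inv, abs_of_pos hpos, inv_mul_le_iff₀ hpos]
          have := hqb v
          simpa [sub_eq_add_neg] using this)
      refine ⟨fun v => q v + B * c ^ n * q' v, hq.add (hq'.smul _), fun v => ?_⟩
      have h1 := hqb' v
      have h2 : f v - (q v + B * c ^ n * q' v)
          = B * c ^ n * ((B * c ^ n)⁻¹ * (f v + -1 * q v) - q' v) := by
        field_simp; ring
      rw [h2, abs_mul, abs_of_pos hpos, pow_succ, ← mul_assoc]
      exact mul_le_mul_of_nonneg_left h1 hpos.le
  refine ⟨hf, fun u v => ?_⟩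
  have hz : Filter.Tendsto (fun n : ℕ => B * c ^ n) Filter.atTop (nhds 0) := by
    simpa using (tendsto_pow_atTop_nhds_zero_of_lt_one hc0.le hc1).const_mul B
  choose q hq hqb using hn
  have hconv : ∀ v, Filter.Tendsto (fun n => q n v) Filter.atTop (nhds (f v)) := by
    intro v
    rw [tendsto_iff_norm_sub_tendsto_zero]
    refine squeeze_zero (fun _ => norm_nonneg _) (fun n => ?_) hz
    rw [Real.norm_eq_abs, abs_sub_comm]
    exact hqb n v
  have hl := ((hconv (u + v)).const_mul (‖u + v‖ ^ 2)).add
    ((hconv (u - v)).const_mul (‖u - v‖ ^ 2))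
  have hr := (((hconv u).const_mul (‖u‖ ^ 2)).const_mul 2).add
    (((hconv v).const_mul (‖v‖ ^ 2)).const_mul 2)
  exact tendsto_nhds_unique hl (hr.congr fun n => ((hq n).par u v).symm)


/-- Polarisation of a function satisfying the parallelogram law. -/
noncomputable def polr {E : Type*} [AddCommGroup E] (F : E → ℝ) (u v : E) : ℝ :=
  (F (u + v) - F u - F v) / 2

lemma polr_comm {E : Type*} [AddCommGroup E] (F : E → ℝ) (u v : E) : polr F u v = polr F v u := by
  simp only [polr, add_comm u v]; ring

lemma polr_add {E : Type*} [AddCommGroup E] {F : E → ℝ}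
    (hF : ∀ u v, F (u + v) + F (u - v) = 2 * F u + 2 * F v) (u v w : E) :
    polr F u (v + w) = polr F u v + polr F u w := by
  have h1 := hF (v + u) (w + u)
  have h2 := hF (u + (v + w)) u
  have h3 := hF v w
  rw [show v + u + (w + u) = u + (v + w) + u by abel, show v + u - (w + u) = v - w by abel,
    add_comm v u, add_comm w u] at h1
  rw [show u + (v + w) - u = v + w by abel] at h2
  simp only [polr]
  linarith

/-- Jordan–von Neumann: a bounded nonnegative function with the parallelogram law is the
quadratic form of a matrix. -/
lemma exists_matrix {N : ℕ} (F : EuclideanSpace ℂ (Fin N) → ℝ) (h0 : ∀ v, 0 ≤ F v)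
    (hb : ∀ v, F v ≤ ‖v‖ ^ 2) (hI : ∀ v, F (Complex.I • v) = F v)
    (hF : ∀ u v, F (u + v) + F (u - v) = 2 * F u + 2 * F v) :
    ∃ ρ : Matrix (Fin N) (Fin N) ℂ, ρ.IsHermitian ∧
      ∀ v : EuclideanSpace ℂ (Fin N), star v.ofLp ⬝ᵥ ρ.mulVec v.ofLp = (F v : ℂ) := by
  set S := polr F with hS
  have hadd : ∀ u v w, S u (v + w) = S u v + S u w := polr_add hF
  have hcomm : ∀ u v, S u v = S v u := polr_comm F
  have hreal : ∀ u (t : ℝ) v, S u (t • v) = t * S u v := by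
    intro u t v
    let φ : ℝ →+ ℝ := AddMonoidHom.mk' (fun t => S u (t • v)) (fun a b => by
      rw [add_smul, hadd])
    have hc : Continuous φ := by
      apply AddMonoidHom.continuous_of_isBounded_nhds_zero φ
        (Metric.ball_mem_nhds (0 : ℝ) one_pos)
      rw [isBounded_iff_forall_norm_le]
      refine ⟨(‖u‖ + ‖v‖) ^ 2 + ‖u‖ ^ 2 + ‖v‖ ^ 2, ?_⟩
      rintro _ ⟨t, ht, rfl⟩
      rw [mem_ball_zero_iff] at ht
      show ‖S u (t • v)‖ ≤ _
      have h1 : ‖t • v‖ ≤ ‖v‖ := by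
        rw [norm_smul]; nlinarith [norm_nonneg v]
      have h2 := hb (u + t • v)
      have h3 := hb u
      have h4 := hb (t • v)
      have h5 : ‖u + t • v‖ ^ 2 ≤ (‖u‖ + ‖v‖) ^ 2 := by
        gcongr
        exact (norm_add_le _ _).trans (by linarith)
      have h6 : ‖t • v‖ ^ 2 ≤ ‖v‖ ^ 2 := by gcongr
      have := h0 (u + t • v)
      have := h0 u
      have := h0 (t • v)
      rw [Real.norm_eq_abs, hS, polr, abs_le]
      constructor <;> nlinarith
    have := map_real_smul φ hc t 1
    simpa [φ] using this
  have hneg : ∀ u v, S u (-v) = - S u v := by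
    intro u v
    have := hreal u (-1) v
    rw [neg_one_smul] at this
    linarith
  have hII : ∀ u v, S (Complex.I • u) (Complex.I • v) = S u v := by
    intro u v
    simp only [hS, polr, ← smul_add, hI]
  have hIsq : ∀ v : EuclideanSpace ℂ (Fin N), Complex.I • Complex.I • v = -v := by
    intro v; rw [smul_smul, Complex.I_mul_I, neg_one_smul]
  have hskew : ∀ u v, S v (Complex.I • u) = - S u (Complex.I • v) := by
    intro u v
    rw [← hII v (Complex.I • u), hIsq, hneg, hcomm]
  have hself : ∀ v, S v v = F v := by
    intro v
    have h1 := hF v v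
    have h2 := hF 0 0
    simp only [sub_self, add_zero] at h1 h2
    simp only [hS, polr]
    linarith
  set H : EuclideanSpace ℂ (Fin N) → EuclideanSpace ℂ (Fin N) → ℂ :=
    fun u v => (S u v : ℂ) - Complex.I * (S u (Complex.I • v) : ℂ) with hH
  have Hadd : ∀ u v w, H u (v + w) = H u v + H u w := by
    intro u v w
    simp only [hH, smul_add, hadd]; push_cast; ring
  have Hsmul : ∀ u (c : ℂ) v, H u (c • v) = c * H u v := by
    intro u c v
    have e1 : c • v = c.re • v + c.im • (Complex.I • v) := by
      conv_lhs => rw [← Complex.re_add_im c]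
      rw [add_smul, mul_smul, Complex.coe_smul, Complex.coe_smul]
    have e2 : Complex.I • c • v = c.re • (Complex.I • v) + c.im • (-v) := by
      rw [e1, smul_add, smul_comm Complex.I c.re v, smul_comm Complex.I c.im, hIsq]
    simp only [hH, e2]
    rw [e1]
    simp only [hadd, hreal, hneg]
    conv_rhs => rw [← Complex.re_add_im c]
    push_cast
    linear_combination (-(c.im : ℂ) * (S u (Complex.I • v) : ℂ)) * (-Complex.I_sq)
  have Hconj : ∀ u v, H v u = star (H u v) := by
    intro u v
    simp only [hH, hskew u v, hcomm v u]
    simp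
  have Hself : ∀ v, H v v = F v := by
    intro v
    have : S v (Complex.I • v) = 0 := by have := hskew v v; linarith
    simp [hH, this, hself]
  let L : EuclideanSpace ℂ (Fin N) → EuclideanSpace ℂ (Fin N) →ₗ[ℂ] ℂ := fun u =>
    { toFun := H u, map_add' := Hadd u, map_smul' := fun c v => by simp [Hsmul] }
  have Hexp : ∀ u v, H u v = ∑ k, v k * H u (EuclideanSpace.single k 1) := by
    intro u v
    have e : v = ∑ k, v k • EuclideanSpace.single k (1 : ℂ) := by
      ext j
      simp [Finset.sum_apply, Pi.single_apply]
    calc H u v = L u (∑ k, v k • EuclideanSpace.single k (1 : ℂ)) := by rw [← e]; rfl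
      _ = _ := by simp only [map_sum, map_smul, smul_eq_mul]; rfl
  refine ⟨Matrix.of fun j k => H (EuclideanSpace.single j 1) (EuclideanSpace.single k 1), ?_, ?_⟩
  · ext j k
    simp only [Matrix.conjTranspose_apply, Matrix.of_apply]
    exact (Hconj _ _).symm
  · intro v
    rw [← Hself v]
    simp only [dotProduct, Matrix.mulVec, Matrix.of_apply, Pi.star_apply]
    have e : ∀ j, H (EuclideanSpace.single j 1) v = ∑ k, H (EuclideanSpace.single j 1)
        (EuclideanSpace.single k 1) * v k := by
      intro j; rw [Hexp]; exact Finset.sum_congr rfl fun k _ => mul_comm _ _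
    simp only [← e]
    calc ∑ x, star (v x) * H (EuclideanSpace.single x 1) v
        = star (∑ k, v k * H v (EuclideanSpace.single k 1)) := by
          rw [star_sum]
          refine Finset.sum_congr rfl fun k _ => ?_
          rw [star_mul', ← Hconj v (EuclideanSpace.single k 1)]
      _ = star (H v v) := by rw [← Hexp v v]
      _ = H v v := (Hconj v v).symm


lemma IsProjection.orth_symm {N : ℕ} {P Q : Matrix (Fin N) (Fin N) ℂ} (hP : IsProjection P)
    (hQ : IsProjection Q) (h : P * Q = 0) : Q * P = 0 := by
  have := congrArg Matrix.conjTranspose h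
  rwa [Matrix.conjTranspose_mul, hP.2, hQ.2, Matrix.conjTranspose_zero] at this

lemma mu_family {N : ℕ} {μ : Matrix (Fin N) (Fin N) ℂ → ℝ}
    (hsum : ∀ (M : ℕ) (Es : Fin M → Matrix (Fin N) (Fin N) ℂ),
      (∀ i, IsProjection (Es i)) → (∀ i j, Commute (Es i) (Es j)) →
      ∑ i, Es i = 1 → ∑ i, μ (Es i) = 1) {n : ℕ} (P : Fin n → Matrix (Fin N) (Fin N) ℂ)
    (hP : ∀ i, IsProjection (P i)) (hPP : ∀ i j, i ≠ j → P i * P j = 0) :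
    IsProjection (1 - ∑ i, P i) ∧ ∑ i, μ (P i) + μ (1 - ∑ i, P i) = 1 := by
  have hc : ∀ i j, Commute (P i) (P j) := by
    intro i j
    by_cases h : i = j
    · rw [h]
    · rw [Commute, SemiconjBy, hPP i j h, hPP j i (Ne.symm h)]
  have hSS : (∑ i, P i) * (∑ i, P i) = ∑ i, P i := by
    rw [Finset.sum_mul]
    refine Finset.sum_congr rfl fun i _ => ?_
    rw [Finset.mul_sum, Finset.sum_eq_single i]
    · exact (hP i).1
    · intro j _ hj; exact hPP i j (Ne.symm hj)
    · simp
  have hSH : (∑ i, P i).IsHermitian := by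
    rw [Matrix.IsHermitian, Matrix.conjTranspose_sum]
    exact Finset.sum_congr rfl fun i _ => (hP i).2
  have hQ : IsProjection (1 - ∑ i, P i) := by
    refine ⟨?_, Matrix.isHermitian_one.sub hSH⟩
    rw [sub_mul, mul_sub, mul_sub, hSS]; simp
  refine ⟨hQ, ?_⟩
  have hcS : ∀ i, Commute (1 - ∑ i, P i) (P i) := fun i =>
    (Commute.one_left _).sub_left (Commute.sum_left _ _ _ fun j _ => hc j i)
  have := hsum (n + 1) (Fin.cons (1 - ∑ i, P i) P) ?_ ?_ ?_
  · rw [Fin.sum_univ_succ] at this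
    simp only [Fin.cons_zero, Fin.cons_succ] at this
    linarith
  · intro i
    refine Fin.cases ?_ (fun i => ?_) i
    · simpa using hQ
    · simpa using hP i
  · intro i j
    refine Fin.cases ?_ (fun i => ?_) i <;> refine Fin.cases ?_ (fun j => ?_) j
    · simp
    · simpa using hcS j
    · simpa using (hcS i).symm
    · simpa using hc i j
  · rw [Fin.sum_univ_succ]
    simp

/-- Rank one projections. -/
noncomputable def pr {N : ℕ} (v : EuclideanSpace ℂ (Fin N)) : Matrix (Fin N) (Fin N) ℂ :=
  (((‖v‖ ^ 2)⁻¹ : ℝ) : ℂ) • Matrix.vecMulVec v.ofLp (star v.ofLp)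

lemma star_dot {N : ℕ} (u v : EuclideanSpace ℂ (Fin N)) :
    star u.ofLp ⬝ᵥ v.ofLp = inner ℂ u v := by
  rw [EuclideanSpace.inner_eq_star_dotProduct, dotProduct_comm]

lemma pr_mul {N : ℕ} (u v : EuclideanSpace ℂ (Fin N)) (h : inner ℂ u v = 0) :
    pr u * pr v = 0 := by
  simp only [pr, Matrix.smul_mul, Matrix.mul_smul, Matrix.vecMulVec_mul_vecMulVec, star_dot, h,
    zero_smul]
  simp

lemma pr_proj {N : ℕ} (v : EuclideanSpace ℂ (Fin N)) : IsProjection (pr v) := by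
  constructor
  · by_cases hv : v = 0
    · simp [pr, hv]
    have hn : ((‖v‖ : ℝ) : ℂ) ≠ 0 := by exact_mod_cast norm_ne_zero_iff.mpr hv
    simp only [pr, Matrix.smul_mul, Matrix.mul_smul, Matrix.vecMulVec_mul_vecMulVec, star_dot,
      Matrix.vecMulVec_smul, smul_smul, inner_self_eq_norm_sq_to_K]
    congr 1
    push_cast
    simp
    field_simp
  · rw [Matrix.IsHermitian, pr, Matrix.conjTranspose_smul, Matrix.conjTranspose_vecMulVec, star_star]
    simp

lemma pr_smul {N : ℕ} (c : ℂ) (hc : c ≠ 0) (v : EuclideanSpace ℂ (Fin N)) : pr (c • v) = pr v := by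
  have hn : ((‖c‖ : ℝ) : ℂ) ≠ 0 := by exact_mod_cast norm_ne_zero_iff.mpr hc
  simp only [pr, WithLp.ofLp_smul, star_smul, Matrix.smul_vecMulVec, Matrix.vecMulVec_smul, smul_smul,
    norm_smul]
  congr 1
  have : c * star c = (‖c‖ : ℂ) ^ 2 := by
    simpa using Complex.mul_conj' c
  rw [mul_comm (star c) c, this]
  push_cast
  rw [mul_pow, mul_inv, mul_comm, ← mul_assoc, mul_inv_cancel₀ (pow_ne_zero 2 hn), one_mul]


lemma resol {u v w : EuclideanSpace ℝ (Fin 3)} (hu : u ≠ 0) (hv : v ≠ 0) (hw : w ≠ 0)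
    (huv : inner ℝ u v = 0) (huw : inner ℝ u w = 0) (hvw : inner ℝ v w = 0) (l m : Fin 3) :
    (‖u‖ ^ 2)⁻¹ * (u l * u m) + (‖v‖ ^ 2)⁻¹ * (v l * v m) + (‖w‖ ^ 2)⁻¹ * (w l * w m)
      = if l = m then 1 else 0 := by
  have h1 : Matrix.of ![fun i => (‖u‖ ^ 2)⁻¹ * u i, fun i => (‖v‖ ^ 2)⁻¹ * v i,
      fun i => (‖w‖ ^ 2)⁻¹ * w i] * (Matrix.of ![u.ofLp, v.ofLp, w.ofLp]).transpose
      = (1 : Matrix (Fin 3) (Fin 3) ℝ) := by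
    have nu : ‖u‖ ^ 2 ≠ 0 := by positivity
    have nv : ‖v‖ ^ 2 ≠ 0 := by positivity
    have nw : ‖w‖ ^ 2 ≠ 0 := by positivity
    have eu := real_inner_self_eq_norm_sq u
    have ev := real_inner_self_eq_norm_sq v
    have ew := real_inner_self_eq_norm_sq w
    simp only [PiLp.inner_apply, Fin.sum_univ_three, RCLike.inner_apply, conj_trivial] at *
    ext i j
    rw [Matrix.mul_apply, Fin.sum_univ_three]
    fin_cases i <;> fin_cases j <;> simp <;> field_simp <;> linarith
  have h3 := mul_eq_one_comm.mp h1
  have h2 := congrArg (fun A : Matrix (Fin 3) (Fin 3) ℝ => A l m) h3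
  beta_reduce at h2
  rw [Matrix.mul_apply, Fin.sum_univ_three, Matrix.one_apply] at h2
  rw [← h2]
  simp
  ring

/-- Isometric embedding of real three-space given by three vectors. -/
noncomputable def emb {N : ℕ} (a b c : EuclideanSpace ℂ (Fin N)) (x : EuclideanSpace ℝ (Fin 3)) :
    EuclideanSpace ℂ (Fin N) := (x 0 : ℂ) • a + (x 1 : ℂ) • b + (x 2 : ℂ) • c

lemma emb_add {N : ℕ} (a b c : EuclideanSpace ℂ (Fin N)) (x y : EuclideanSpace ℝ (Fin 3)) :
    emb a b c (x + y) = emb a b c x + emb a b c y := by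
  simp only [emb, PiLp.add_apply, Complex.ofReal_add, add_smul]; abel

lemma emb_sub {N : ℕ} (a b c : EuclideanSpace ℂ (Fin N)) (x y : EuclideanSpace ℝ (Fin 3)) :
    emb a b c (x - y) = emb a b c x - emb a b c y := by
  simp only [emb, PiLp.sub_apply, Complex.ofReal_sub, sub_smul]; abel

lemma emb_smul {N : ℕ} (a b c : EuclideanSpace ℂ (Fin N)) (t : ℝ) (x : EuclideanSpace ℝ (Fin 3)) :
    emb a b c (t • x) = (t : ℂ) • emb a b c x := by
  simp only [emb, PiLp.smul_apply, smul_eq_mul, Complex.ofReal_mul, mul_smul, smul_add]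

/-- Orthonormal triples. -/
structure ON3 {N : ℕ} (a b c : EuclideanSpace ℂ (Fin N)) : Prop where
  a1 : ‖a‖ = 1
  b1 : ‖b‖ = 1
  c1 : ‖c‖ = 1
  ab : inner ℂ a b = 0
  ac : inner ℂ a c = 0
  bc : inner ℂ b c = 0

lemma ON3.inner_emb {N : ℕ} {a b c : EuclideanSpace ℂ (Fin N)} (h : ON3 a b c)
    (x y : EuclideanSpace ℝ (Fin 3)) :
    inner ℂ (emb a b c x) (emb a b c y) = ((inner ℝ x y : ℝ) : ℂ) := by
  have ba := inner_eq_zero_symm.mp h.ab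
  have ca := inner_eq_zero_symm.mp h.ac
  have cb := inner_eq_zero_symm.mp h.bc
  simp only [emb, inner_add_left, inner_add_right, inner_smul_left, inner_smul_right, h.ab, h.ac,
    h.bc, ba, ca, cb, inner_self_eq_norm_sq_to_K, h.a1, h.b1, h.c1, PiLp.inner_apply,
    Fin.sum_univ_three, RCLike.inner_apply, conj_trivial, Complex.conj_ofReal]
  push_cast
  simp

lemma ON3.norm_emb {N : ℕ} {a b c : EuclideanSpace ℂ (Fin N)} (h : ON3 a b c)
    (x : EuclideanSpace ℝ (Fin 3)) : ‖emb a b c x‖ = ‖x‖ := by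
  have h1 := h.inner_emb x x
  rw [inner_self_eq_norm_sq_to_K, real_inner_self_eq_norm_sq] at h1
  have h2 : ‖emb a b c x‖ ^ 2 = ‖x‖ ^ 2 := by
    apply Complex.ofReal_injective
    rw [← h1]; simp
  exact (sq_eq_sq₀ (norm_nonneg _) (norm_nonneg _)).mp h2

lemma ON3.sum_pr {N : ℕ} {a b c : EuclideanSpace ℂ (Fin N)} (h : ON3 a b c)
    {u v w : EuclideanSpace ℝ (Fin 3)} (hu : u ≠ 0) (hv : v ≠ 0) (hw : w ≠ 0)
    (huv : inner ℝ u v = 0) (huw : inner ℝ u w = 0) (hvw : inner ℝ v w = 0) :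
    pr (emb a b c u) + pr (emb a b c v) + pr (emb a b c w) = pr a + pr b + pr c := by
  have R : ∀ l m, _ := fun l m => congrArg (fun t : ℝ => (t : ℂ)) (resol hu hv hw huv huw hvw l m)
  have r00 := R 0 0
  have r01 := R 0 1
  have r02 := R 0 2
  have r11 := R 1 1
  have r12 := R 1 2
  have r22 := R 2 2
  simp only [Fin.isValue, reduceIte, Fin.reduceEq] at r00 r01 r02 r11 r12 r22
  push_cast at r00 r01 r02 r11 r12 r22
  ext i j
  simp only [pr, h.norm_emb, h.a1, h.b1, h.c1]
  simp only [emb, Matrix.add_apply, Matrix.smul_apply,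
    Matrix.vecMulVec_apply, PiLp.add_apply, PiLp.smul_apply, Pi.star_apply, smul_eq_mul, star_add,
    star_mul', RCLike.star_def, Complex.conj_ofReal]
  push_cast
  linear_combination (a i * (starRingEnd ℂ) (a j)) * r00 + (b i * (starRingEnd ℂ) (b j)) * r11 + (c i * (starRingEnd ℂ) (c j)) * r22
    + (a i * (starRingEnd ℂ) (b j) + b i * (starRingEnd ℂ) (a j)) * r01 + (a i * (starRingEnd ℂ) (c j) + c i * (starRingEnd ℂ) (a j)) * r02
    + (c i * (starRingEnd ℂ) (b j) + b i * (starRingEnd ℂ) (c j)) * r12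


/-- The hypotheses of Gleason's theorem. -/
structure GM {N : ℕ} (μ : Matrix (Fin N) (Fin N) ℂ → ℝ) : Prop where
  pos : ∀ E : Matrix (Fin N) (Fin N) ℂ, IsProjection E → 0 ≤ μ E
  sum : ∀ (M : ℕ) (Es : Fin M → Matrix (Fin N) (Fin N) ℂ),
      (∀ i, IsProjection (Es i)) → (∀ i j, Commute (Es i) (Es j)) →
      ∑ i, Es i = 1 → ∑ i, μ (Es i) = 1

/-- The frame quadratic function. -/
noncomputable def frm {N : ℕ} (μ : Matrix (Fin N) (Fin N) ℂ → ℝ) (v : EuclideanSpace ℂ (Fin N)) : ℝ :=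
  ‖v‖ ^ 2 * μ (pr v)

section
variable {N : ℕ} {μ : Matrix (Fin N) (Fin N) ℂ → ℝ}

lemma GM.compl (h : GM μ) {P : Matrix (Fin N) (Fin N) ℂ} (hP : IsProjection P) :
    IsProjection (1 - P) ∧ μ P + μ (1 - P) = 1 := by
  have := mu_family h.sum (n := 1) (fun _ => P) (fun _ => hP)
    (fun i j hij => absurd (Subsingleton.elim i j) hij)
  simpa using this

lemma GM.le_one (h : GM μ) {P : Matrix (Fin N) (Fin N) ℂ} (hP : IsProjection P) : μ P ≤ 1 := by
  have h1 := h.compl hP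
  have := h.pos _ h1.1
  linarith

lemma GM.one (h : GM μ) : μ 1 = 1 := by
  have := h.sum 1 (fun _ => 1) (fun _ => ⟨by simp, Matrix.isHermitian_one⟩) (fun _ _ => rfl) (by simp)
  simpa using this

lemma GM.zero (h : GM μ) : μ 0 = 0 := by
  have := h.compl (P := 0) ⟨by simp, Matrix.isHermitian_zero⟩
  rw [sub_zero, h.one] at this
  linarith [this.2]

lemma GM.frm_nonneg (h : GM μ) (v : EuclideanSpace ℂ (Fin N)) : 0 ≤ frm μ v :=
  mul_nonneg (by positivity) (h.pos _ (pr_proj v))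

lemma GM.frm_le (h : GM μ) (v : EuclideanSpace ℂ (Fin N)) : frm μ v ≤ ‖v‖ ^ 2 := by
  have := h.le_one (pr_proj v)
  have h2 : 0 ≤ ‖v‖ ^ 2 := by positivity
  unfold frm
  nlinarith

lemma frm_zero : frm μ 0 = 0 := by simp [frm]

lemma frm_smul (c : ℂ) (v : EuclideanSpace ℂ (Fin N)) : frm μ (c • v) = ‖c‖ ^ 2 * frm μ v := by
  by_cases hc : c = 0
  · simp [hc, frm]
  · rw [frm, pr_smul c hc, norm_smul, frm]; ring

lemma frm_neg (v : EuclideanSpace ℂ (Fin N)) : frm μ (-v) = frm μ v := by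
  rw [← neg_one_smul ℂ v, frm_smul]; simp

lemma GM.triple (h : GM μ) {a b c : EuclideanSpace ℂ (Fin N)} (hab : inner ℂ a b = 0)
    (hac : inner ℂ a c = 0) (hbc : inner ℂ b c = 0) :
    μ (pr a) + μ (pr b) + μ (pr c) = 1 - μ (1 - (pr a + pr b + pr c)) := by
  have := (mu_family h.sum (n := 3) ![pr a, pr b, pr c] (by
    intro i; fin_cases i <;> exact pr_proj _) (by
    have ba := inner_eq_zero_symm.mp hab
    have ca := inner_eq_zero_symm.mp hac
    have cb := inner_eq_zero_symm.mp hbc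
    intro i j hij
    fin_cases i <;> fin_cases j <;> first | exact absurd rfl hij | (apply pr_mul; assumption))).2
  simp only [Fin.sum_univ_three, Matrix.cons_val_zero, Matrix.cons_val_one, Matrix.cons_val] at this
  linarith

lemma GM.emb_par (h : GM μ) {a b c : EuclideanSpace ℂ (Fin N)} (o : ON3 a b c)
    (x y : EuclideanSpace ℝ (Fin 3)) :
    frm μ (emb a b c x + emb a b c y) + frm μ (emb a b c x - emb a b c y)
      = 2 * frm μ (emb a b c x) + 2 * frm μ (emb a b c y) := by
  classical
  set W := 1 - μ (1 - (pr a + pr b + pr c)) with hW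
  have hWt := h.triple o.ab o.ac o.bc
  have wa := h.pos _ (pr_proj a)
  have wb := h.pos _ (pr_proj b)
  have wc := h.pos _ (pr_proj c)
  have wa' := h.le_one (pr_proj a)
  have wb' := h.le_one (pr_proj b)
  have wc' := h.le_one (pr_proj c)
  let f : EuclideanSpace ℝ (Fin 3) → ℝ := fun x => if x = 0 then 0 else μ (pr (emb a b c x)) - W / 3
  have hfv : FV f := by
    refine ⟨by simp [f], ?_, ?_⟩
    · intro t v ht
      by_cases hv : v = 0
      · simp [f, hv]
      · have : t • v ≠ 0 := smul_ne_zero ht hv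
        simp only [f, hv, this, if_false]
        rw [emb_smul, pr_smul _ (by exact_mod_cast ht)]
    · intro u v w hu hv hw huv huw hvw
      simp only [f, hu, hv, hw, if_false]
      have h1 := h.triple (a := emb a b c u) (b := emb a b c v) (c := emb a b c w)
        (by rw [o.inner_emb, huv]; simp) (by rw [o.inner_emb, huw]; simp)
        (by rw [o.inner_emb, hvw]; simp)
      rw [o.sum_pr hu hv hw huv huw hvw] at h1
      linarith
  have hq := hfv.parallelogram (B := 2) (by norm_num) (by
    intro v
    by_cases hv : v = 0
    · simp [f, hv]
    · simp only [f, hv, if_false]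
      have := h.pos _ (pr_proj (emb a b c v))
      have := h.le_one (pr_proj (emb a b c v))
      rw [abs_le]; constructor <;> linarith)
  have key : ∀ z, ‖z‖ ^ 2 * f z = frm μ (emb a b c z) - ‖z‖ ^ 2 * (W / 3) := by
    intro z
    by_cases hz : z = 0
    · simp [f, hz, frm, o.norm_emb]
    · simp only [f, hz, if_false, frm, o.norm_emb]; ring
  have hp := hq.par x y
  have hn := parallelogram_law_with_norm ℝ x y
  simp only [key, emb_add, emb_sub] at hp
  linear_combination hp + (W / 3) * hn

lemma GM.par_real (h : GM μ) (hN : 3 ≤ N) (u v : EuclideanSpace ℂ (Fin N))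
    (huv : (inner ℂ u v).im = 0) :
    frm μ (u + v) + frm μ (u - v) = 2 * frm μ u + 2 * frm μ v := by
  by_cases hu : u = 0
  · simp only [hu, zero_add, zero_sub, frm_neg, frm_zero]; ring
  have h3 : 3 ≤ Module.finrank ℂ (EuclideanSpace ℂ (Fin N)) := by simpa using hN
  have hnu : (‖u‖ : ℂ) ≠ 0 := by exact_mod_cast norm_ne_zero_iff.mpr hu
  set a : EuclideanSpace ℂ (Fin N) := ((‖u‖⁻¹ : ℝ) : ℂ) • u with ha
  have a1 : ‖a‖ = 1 := by
    rw [ha, norm_smul, Complex.norm_real, norm_inv, norm_norm,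
      inv_mul_cancel₀ (norm_ne_zero_iff.mpr hu)]
  have ua : u = (‖u‖ : ℂ) • a := by
    rw [ha, smul_smul]; push_cast; rw [mul_inv_cancel₀ hnu, one_smul]
  set r : ℝ := (inner ℂ a v).re with hr
  have har : inner ℂ a v = (r : ℂ) := by
    apply Complex.ext
    · simp [hr]
    · rw [ha, inner_smul_left, Complex.conj_ofReal, Complex.im_ofReal_mul, huv]; simp
  set w := v - (r : ℂ) • a with hw
  have haw : inner ℂ a w = 0 := by
    rw [hw, inner_sub_right, inner_smul_right, inner_self_eq_norm_sq_to_K, a1, har]; simp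
  obtain ⟨b, s, b1, hab, hwb⟩ : ∃ (b : EuclideanSpace ℂ (Fin N)) (s : ℝ), ‖b‖ = 1 ∧
      inner ℂ a b = 0 ∧ w = (s : ℂ) • b := by
    by_cases hw0 : w = 0
    · obtain ⟨b, b1, hb, -⟩ := exists_unit_normal h3 a a
      exact ⟨b, 0, b1, hb, by simp [hw0]⟩
    · have hnw : (‖w‖ : ℂ) ≠ 0 := by exact_mod_cast norm_ne_zero_iff.mpr hw0
      refine ⟨((‖w‖⁻¹ : ℝ) : ℂ) • w, ‖w‖, ?_, ?_, ?_⟩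
      · rw [norm_smul, Complex.norm_real, norm_inv, norm_norm,
          inv_mul_cancel₀ (norm_ne_zero_iff.mpr hw0)]
      · rw [inner_smul_right, haw, mul_zero]
      · rw [smul_smul]; push_cast; rw [mul_inv_cancel₀ hnw, one_smul]
  obtain ⟨c, c1, hac, hbc⟩ := exists_unit_normal h3 a b
  have o : ON3 a b c := ⟨a1, b1, c1, hab, hac, hbc⟩
  have e1 : emb a b c !₂[‖u‖, 0, 0] = u := by
    conv_rhs => rw [ua]
    simp [emb]
  have e2 : emb a b c !₂[r, s, 0] = v := by
    have : v = (r : ℂ) • a + w := by rw [hw]; abel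
    rw [this, hwb]
    simp [emb]
  have := h.emb_par o !₂[‖u‖, 0, 0] !₂[r, s, 0]
  rwa [e1, e2] at this

lemma GM.par (h : GM μ) (hN : 3 ≤ N) (u v : EuclideanSpace ℂ (Fin N)) :
    frm μ (u + v) + frm μ (u - v) = 2 * frm μ u + 2 * frm μ v := by
  have h3 : 3 ≤ Module.finrank ℂ (EuclideanSpace ℂ (Fin N)) := by simpa using hN
  obtain ⟨z, z1, huz, hvz⟩ := exists_unit_normal h3 u v
  have hzv := inner_eq_zero_symm.mp hvz
  have hzz : inner ℂ z z = (1 : ℂ) := by rw [inner_self_eq_norm_sq_to_K, z1]; simp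
  set m : ℝ := (inner ℂ u v).im with hm
  set β : ℂ := -(m : ℂ) * Complex.I with hβ
  have P1 := h.par_real hN (u + z) (v + β • z) (by
    simp only [inner_add_left, inner_add_right, inner_smul_right, huz, hzv, hzz]
    simp [hβ, hm])
  have P2 := h.par_real hN (u - z) (v - β • z) (by
    simp only [inner_sub_left, inner_sub_right, inner_smul_right, huz, hzv, hzz]
    simp [hβ, hm])
  have key : ∀ s : EuclideanSpace ℂ (Fin N), inner ℂ s z = 0 → ∀ c : ℂ,
      frm μ (s + c • z) + frm μ (s - c • z) = 2 * frm μ s + 2 * (‖c‖ ^ 2 * frm μ z) := by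
    intro s hs c
    rw [← frm_smul]
    exact h.par_real hN _ _ (by rw [inner_smul_right, hs]; simp)
  have k1 := key u huz 1
  have k2 := key v hvz β
  have k3 := key (u + v) (by rw [inner_add_left, huz, hvz, add_zero]) (1 + β)
  have k4 := key (u - v) (by rw [inner_sub_left, huz, hvz, sub_zero]) (1 - β)
  rw [one_smul] at k1
  have hn := parallelogram_law_with_norm ℂ (1 : ℂ) β
  rw [show u + z + (v + β • z) = u + v + (1 + β) • z by rw [add_smul, one_smul]; abel,
    show u + z - (v + β • z) = u - v + (1 - β) • z by rw [sub_smul, one_smul]; abel] at P1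
  rw [show u - z + (v - β • z) = u + v - (1 + β) • z by rw [add_smul, one_smul]; abel,
    show u - z - (v - β • z) = u - v - (1 - β) • z by rw [sub_smul, one_smul]; abel] at P2
  linear_combination (P1 + P2 - k3 - k4) / 2 + k1 + k2 - (frm μ z) * hn
end


lemma trace_pr_mul {N : ℕ} (ρ : Matrix (Fin N) (Fin N) ℂ) (v : EuclideanSpace ℂ (Fin N))
    (hv : ‖v‖ = 1) : (pr v * ρ).trace = star v.ofLp ⬝ᵥ ρ.mulVec v.ofLp := by
  rw [Matrix.trace_mul_comm, pr, hv, Matrix.mul_smul, Matrix.mul_vecMulVec, Matrix.trace_smul,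
    Matrix.trace_vecMulVec, dotProduct_comm]
  simp

lemma sum_pr_basis {N : ℕ} (e : OrthonormalBasis (Fin N) ℂ (EuclideanSpace ℂ (Fin N))) :
    ∑ i, pr (e i) = 1 := by
  ext j k
  have := e.sum_inner_mul_inner (EuclideanSpace.single j 1) (EuclideanSpace.single k 1)
  simp only [EuclideanSpace.inner_single_left, EuclideanSpace.inner_single_right] at this
  rw [Matrix.sum_apply]
  simp only [pr, e.norm_eq_one, Matrix.smul_apply, Matrix.vecMulVec_apply]
  simp only [map_one, one_mul, one_pow, inv_one, Complex.ofReal_one, one_smul, Pi.star_apply,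
    RCLike.star_def] at this ⊢
  rw [this, Matrix.one_apply]
  simp [eq_comm]

lemma GM.decomp {N : ℕ} {μ : Matrix (Fin N) (Fin N) ℂ → ℝ} (h : GM μ)
    {E : Matrix (Fin N) (Fin N) ℂ} (hE : IsProjection E) :
    ∃ (e : OrthonormalBasis (Fin N) ℂ (EuclideanSpace ℂ (Fin N))) (l : Fin N → ℝ),
      E = ∑ i, (l i : ℂ) • pr (e i) ∧ μ E = ∑ i, l i * μ (pr (e i)) := by
  set e := hE.2.eigenvectorBasis with he
  set l := hE.2.eigenvalues with hl
  have hm : ∀ i, E.mulVec (e i).ofLp = (l i : ℂ) • (e i).ofLp := by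
    intro i
    have := hE.2.mulVec_eigenvectorBasis i
    rw [this]; ext j; simp [he, hl]
  have hpr : ∀ i, E * pr (e i) = (l i : ℂ) • pr (e i) := by
    intro i
    rw [pr, Matrix.mul_smul, Matrix.mul_vecMulVec, hm, Matrix.smul_vecMulVec, smul_comm]
  have hl01 : ∀ i, l i = 0 ∨ l i = 1 := by
    intro i
    have h1 : E.mulVec (E.mulVec (e i).ofLp) = E.mulVec (e i).ofLp := by
      rw [Matrix.mulVec_mulVec, hE.1]
    rw [hm, Matrix.mulVec_smul, hm, smul_smul] at h1
    have h2 : ((l i : ℂ) * l i - l i) • (e i).ofLp = 0 := by rw [sub_smul, h1, sub_self]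
    have h4 : (e i).ofLp ≠ 0 := by
      intro h0
      apply e.orthonormal.ne_zero i
      ext j; simp [h0]
    have h3 : (l i : ℂ) * l i - l i = 0 := (smul_eq_zero.mp h2).resolve_right h4
    have h5 : l i * l i - l i = 0 := by exact_mod_cast h3
    have h6 : l i * (l i - 1) = 0 := by linarith
    rcases mul_eq_zero.mp h6 with h7 | h7
    · exact Or.inl h7
    · exact Or.inr (by linarith)
  have hEs : E = ∑ i, (l i : ℂ) • pr (e i) := by
    calc E = E * ∑ i, pr (e i) := by rw [sum_pr_basis, mul_one]
      _ = _ := by rw [Finset.mul_sum]; exact Finset.sum_congr rfl fun i _ => hpr i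
  refine ⟨e, l, hEs, ?_⟩
  have hμ : ∀ i, μ ((l i : ℂ) • pr (e i)) = l i * μ (pr (e i)) := by
    intro i
    rcases hl01 i with h0 | h0 <;> simp [h0, h.zero]
  have h1 := (mu_family h.sum (fun i => (l i : ℂ) • pr (e i)) (by
    intro i
    rcases hl01 i with h0 | h0
    · rw [h0, Complex.ofReal_zero, zero_smul]
      exact ⟨by simp, Matrix.isHermitian_zero⟩
    · simpa [h0] using pr_proj (e i)) (by
    intro i j hij
    rw [Matrix.smul_mul, Matrix.mul_smul, pr_mul _ _ (e.orthonormal.2 hij)]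
    simp)).2
  rw [← hEs] at h1
  simp only [hμ] at h1
  have h2 := (h.compl hE).2
  linarith

/-- **Gleason's theorem.** For `N ≥ 3`, any nonnegative real-valued function `μ` on the
orthogonal projections of `ℂ^N` which sums to `1` on every complete tuple of pairwise
commuting orthogonal projections is of the form `μ(E) = tr(Eρ)` for a positive semidefinite
Hermitian operator `ρ` with `tr ρ = 1`. -/
theorem gleason (N : ℕ) (hN : 3 ≤ N) (μ : Matrix (Fin N) (Fin N) ℂ → ℝ)
    (hpos : ∀ E : Matrix (Fin N) (Fin N) ℂ, IsProjection E → 0 ≤ μ E)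
    (hsum : ∀ (M : ℕ) (Es : Fin M → Matrix (Fin N) (Fin N) ℂ),
      (∀ i, IsProjection (Es i)) → (∀ i j, Commute (Es i) (Es j)) →
      ∑ i, Es i = 1 → ∑ i, μ (Es i) = 1) :
    ∃ ρ : Matrix (Fin N) (Fin N) ℂ, ρ.PosSemidef ∧ ρ.trace = 1 ∧
      ∀ E : Matrix (Fin N) (Fin N) ℂ, IsProjection E → (E * ρ).trace = (μ E : ℂ) := by
  have h : GM μ := ⟨hpos, hsum⟩
  obtain ⟨ρ, hH, hq⟩ := exists_matrix (frm μ) h.frm_nonneg h.frm_le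
    (fun v => by rw [frm_smul]; simp) (h.par hN)
  have main : ∀ E : Matrix (Fin N) (Fin N) ℂ, IsProjection E → (E * ρ).trace = (μ E : ℂ) := by
    intro E hE
    obtain ⟨e, l, h1, h2⟩ := h.decomp hE
    rw [h2]
    conv_lhs => rw [h1]
    rw [Finset.sum_mul, Matrix.trace_sum]
    push_cast
    refine Finset.sum_congr rfl fun i _ => ?_
    rw [Matrix.smul_mul, Matrix.trace_smul, trace_pr_mul _ _ (e.norm_eq_one i), hq, frm,
      e.norm_eq_one]
    simp
  refine ⟨ρ, ?_, ?_, main⟩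
  · refine Matrix.PosSemidef.of_dotProduct_mulVec_nonneg hH fun x => ?_
    have := hq (WithLp.toLp 2 x)
    simp only at this
    rw [this]
    exact_mod_cast h.frm_nonneg _
  · have := main 1 ⟨by simp, Matrix.isHermitian_one⟩
    rw [one_mul, h.one] at this
    simpa using this
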